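/- Let A be a finitely generated commutative unital ℝ-algebra, let f₁,…,f_k ∈ A, let T be the preordering of A generated by f₁,…,f_k, and let h₁,…,h_m ∈ A be such that each h_j is bounded on K(T), i.e. there is a constant C with |χ(h_j)| ≤ C for all χ ∈ K(T) and j = 1,…,m. Then T satisfies (SMP) if and only if for every λ ∈ h(K(T)) the preordering T_λ satisfies (SMP). -/

import Mathlib

open MeasureTheory

/-- The preordering of a commutative ring generated by a set `S`:
the smallest subset containing all squares and `S`, closed under addition
and multiplication. -/
inductive IsInPreordering {A : Type*} [CommRing A] (S : Set A) : A → Prop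
  | sq (a : A) : IsInPreordering S (a ^ 2)
  | gen {a : A} : a ∈ S → IsInPreordering S a
  | add {a b : A} : IsInPreordering S a → IsInPreordering S b → IsInPreordering S (a + b)
  | mul {a b : A} : IsInPreordering S a → IsInPreordering S b → IsInPreordering S (a * b)

/-- The positivity set `K(T)` of the preordering generated by `S`, inside the
character space `A →ₐ[ℝ] ℝ`. -/
def KSet {A : Type*} [CommRing A] [Algebra ℝ A] (S : Set A) : Set (A →ₐ[ℝ] ℝ) :=
  {χ | ∀ a : A, IsInPreordering S a → 0 ≤ χ a}

/-- The character space carries the topology of pointwise convergence. -/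
noncomputable instance charTop (A : Type*) [CommRing A] [Algebra ℝ A] :
    TopologicalSpace (A →ₐ[ℝ] ℝ) :=
  TopologicalSpace.induced (fun χ (a : A) => χ a) Pi.topologicalSpace

/-- The Borel σ-algebra on the character space. -/
noncomputable instance charMeas (A : Type*) [CommRing A] [Algebra ℝ A] :
    MeasurableSpace (A →ₐ[ℝ] ℝ) := borel _

/-- `L` is a `K(S)`-moment functional: it is given by integration against a positive
Borel measure on the character space supported on `K(S)`. -/
def IsKMomentFunctional {A : Type*} [CommRing A] [Algebra ℝ A] (S : Set A)
    (L : A →ₗ[ℝ] ℝ) : Prop :=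
  ∃ μ : Measure (A →ₐ[ℝ] ℝ), μ (KSet S)ᶜ = 0 ∧
    ∀ a : A, Integrable (fun χ : A →ₐ[ℝ] ℝ => χ a) μ ∧ L a = ∫ χ : A →ₐ[ℝ] ℝ, χ a ∂μ

/-- The preordering generated by `S` has the strong moment property (SMP): every
linear functional nonnegative on it is a moment functional with representing
measure supported on `K(S)`. -/
def HasSMP {A : Type*} [CommRing A] [Algebra ℝ A] (S : Set A) : Prop :=
  ∀ L : A →ₗ[ℝ] ℝ, (∀ a : A, IsInPreordering S a → 0 ≤ L a) → IsKMomentFunctional S L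

/-- The generators of the fibre preordering `T_λ`. -/
def fibreGens {A : Type*} [CommRing A] [Algebra ℝ A] {k m : ℕ}
    (f : Fin k → A) (h : Fin m → A) (lam : Fin m → ℝ) : Set A :=
  Set.range f ∪ ⋃ j : Fin m,
    {h j - algebraMap ℝ A (lam j), algebraMap ℝ A (lam j) - h j}

/-!
If `T` has (SMP), a `T_λ`-positive functional `L` has a representing measure on `K(T)`, and since
`-(h_j - λ_j) ^ 2 ∈ T_λ`, it satisfies `∫ (h_j - λ_j) ^ 2 ≤ 0`; so the measure lives on the fibre.

Conversely, by Haviland's theorem it suffices that a `T`-positive functional is nonnegative at every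
`a` that is nonnegative on `K(T)`. If some `T`-positive functional is negative at `a`, then so is an
extremal one `M`, by Bauer's minimum principle: since `A` has countable dimension, every
`T`-positive functional lies in a compact convex cap of the cone of these functionals. By the
Positivstellensatz (obtained here from an Artin–Lang theorem), boundedness of `h_j` on `K(T)` makes
`c • M ± M (h_j * ·)` again `T`-positive for some `c > 0`, and extremality turns this into
`M (h_j * x) = λ_j * M x`. Hence `M` is `T_λ`-positive. If the fibre over `λ` is nonempty, (SMP) of
`T_λ` gives `0 ≤ M a`; if it is empty, `-1 ∈ T_λ` by the Positivstellensatz, so `M 1 = 0`, and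
`M = 0` by Cauchy–Schwarz.
-/

namespace FibreTheorem

open Polynomial Set

/-! ### Polynomials over ordered fields with the intermediate value property -/

/-- The intermediate value property for polynomials over an ordered field. Among ordered fields it
characterises the real closed ones; it is all the argument needs to know about them. -/
class PolynomialIVT (R : Type*) [Field R] [LinearOrder R] : Prop where
  exists_root {p : R[X]} {a b : R} (hab : a < b) (hp : p.eval a * p.eval b < 0) :
    ∃ c ∈ Ioo a b, p.eval c = 0

instance polynomialIVT_real : PolynomialIVT ℝ where
  exists_root {p a b} hab hp := by
    have hcont : ContinuousOn (fun x ↦ p.eval x) (Icc a b) := p.continuous.continuousOn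
    rcases mul_neg_iff.1 hp with ⟨ha, hb⟩ | ⟨ha, hb⟩
    · exact intermediate_value_Ioo' hab.le hcont ⟨hb, ha⟩
    · exact intermediate_value_Ioo hab.le hcont ⟨ha, hb⟩

section MeanValue

variable {R : Type*} [Field R]

theorem exists_eq_X_sub_C_pow_succ_mul {q : R[X]} (hq : q ≠ 0) {a : R} (ha : q.eval a = 0) :
    ∃ (m : ℕ) (g : R[X]), q = (X - C a) ^ (m + 1) * g ∧ g.eval a ≠ 0 := by
  obtain ⟨g, hg, hdvd⟩ := exists_eq_pow_rootMultiplicity_mul_and_not_dvd q hq a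
  have hpos : 0 < q.rootMultiplicity a := (rootMultiplicity_pos hq).2 ha
  exact ⟨q.rootMultiplicity a - 1, g, by rwa [Nat.sub_add_cancel hpos],
    fun h ↦ hdvd (dvd_iff_isRoot.2 h)⟩

variable [LinearOrder R] [IsStrictOrderedRing R] [PolynomialIVT R]

theorem exists_derivative_root_of_factorization {k : R[X]} {a b : R} (hab : a < b)
    (hk : 0 < k.eval a * k.eval b) (m n : ℕ) :
    ∃ c ∈ Ioo a b,
      (derivative ((X - C a) ^ (m + 1) * ((X - C b) ^ (n + 1) * k))).eval c = 0 := by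
  set g : R[X] := C ((m : R) + 1) * (X - C b) * k + C ((n : R) + 1) * (X - C a) * k
    + (X - C a) * (X - C b) * derivative k with hg
  have hderiv : derivative ((X - C a) ^ (m + 1) * ((X - C b) ^ (n + 1) * k)) =
      (X - C a) ^ m * (X - C b) ^ n * g := by
    simp only [hg, derivative_mul, derivative_pow, derivative_sub, derivative_X, derivative_C,
      Nat.cast_add, Nat.cast_one, map_add, map_one, map_natCast, Nat.add_sub_cancel]
    ring
  have hga : g.eval a = ((m : R) + 1) * (a - b) * k.eval a := by simp [hg]
  have hgb : g.eval b = ((n : R) + 1) * (b - a) * k.eval b := by simp [hg]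
  have hneg : g.eval a * g.eval b < 0 := by
    have : 0 < ((m : R) + 1) * ((n : R) + 1) * (b - a) ^ 2 * (k.eval a * k.eval b) := by
      have := sub_pos.2 hab
      positivity
    rw [hga, hgb]
    linarith
  obtain ⟨c, hc, hroot⟩ := PolynomialIVT.exists_root hab hneg
  exact ⟨c, hc, by rw [hderiv]; simp [hroot]⟩

theorem exists_derivative_root_of_consecutive_roots {q : R[X]} {a b : R} (hab : a < b)
    (hq : q ≠ 0) (ha : q.eval a = 0) (hb : q.eval b = 0) (hne : ∀ c ∈ Ioo a b, q.eval c ≠ 0) :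
    ∃ c ∈ Ioo a b, q.derivative.eval c = 0 := by
  obtain ⟨m, g, rfl, hga⟩ := exists_eq_X_sub_C_pow_succ_mul hq ha
  have hgb : g.eval b = 0 := by simpa [sub_ne_zero.2 hab.ne'] using hb
  obtain ⟨n, k, rfl, hkb⟩ := exists_eq_X_sub_C_pow_succ_mul (right_ne_zero_of_mul hq) hgb
  refine exists_derivative_root_of_factorization hab (not_le.1 fun hle ↦ ?_) m n
  have hka : k.eval a ≠ 0 := fun h ↦ hga (by simp [h])
  obtain ⟨c, hc, hroot⟩ :=
    PolynomialIVT.exists_root hab (hle.lt_of_ne (mul_ne_zero hka hkb))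
  exact hne c hc (by simp [hroot])

theorem exists_derivative_root_between_roots {q : R[X]} {a b : R} (hab : a < b)
    (ha : q.eval a = 0) (hb : q.eval b = 0) : ∃ c ∈ Ioo a b, q.derivative.eval c = 0 := by
  rcases eq_or_ne q 0 with rfl | hq
  · obtain ⟨c, hc⟩ := exists_between hab
    exact ⟨c, hc, by simp⟩
  have hfin : {c | q.eval c = 0 ∧ a < c}.Finite :=
    (q.roots.toFinset.finite_toSet).subset fun c hc ↦ by simpa [hq] using hc.1
  obtain ⟨b', ⟨hb', hab'⟩, hmin⟩ := exists_min_image _ id hfin ⟨b, hb, hab⟩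
  obtain ⟨c, hc, hroot⟩ := exists_derivative_root_of_consecutive_roots hab' hq ha hb'
    fun c hc h ↦ (hmin c ⟨h, hc.1⟩).not_gt hc.2
  exact ⟨c, ⟨hc.1, hc.2.trans_le (hmin b ⟨hb, hab⟩)⟩, hroot⟩

theorem exists_derivative_eval_mul_sub_eq (p : R[X]) {a b : R} (hab : a < b) :
    ∃ c ∈ Ioo a b, p.derivative.eval c * (b - a) = p.eval b - p.eval a := by
  set s := (p.eval b - p.eval a) / (b - a)
  have hs : s * (b - a) = p.eval b - p.eval a := div_mul_cancel₀ _ (sub_pos.2 hab).ne'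
  obtain ⟨c, hc, hroot⟩ := exists_derivative_root_between_roots
    (q := p - C (p.eval a) - C s * (X - C a)) hab (by simp) (by simp; linear_combination -hs)
  have hderiv : p.derivative.eval c - s = 0 := by simpa using hroot
  exact ⟨c, hc, by rw [← hs, sub_eq_zero.1 hderiv]⟩

theorem eval_lt_eval_of_derivative_pos {p : R[X]} {a b : R} (hab : a < b)
    (h : ∀ c ∈ Ioo a b, 0 < p.derivative.eval c) : p.eval a < p.eval b := by
  obtain ⟨c, hc, heq⟩ := exists_derivative_eval_mul_sub_eq p hab
  exact sub_pos.1 (heq ▸ mul_pos (h c hc) (sub_pos.2 hab))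

theorem exists_gt_eval_pos_of_derivative_pos {p : R[X]} (hp : 0 < p.natDegree) {x : R}
    (h : ∀ c, x < c → 0 < p.derivative.eval c) : ∃ t, x < t ∧ 0 < p.eval t := by
  have htend := p.tendsto_abv_atTop (abs : R → R) (natDegree_pos_iff_degree_pos.1 hp)
    (l := Filter.atTop) (z := id) (by simpa using Filter.tendsto_abs_atTop_atTop)
  obtain ⟨t, hlarge, hxt⟩ := ((htend.eventually_gt_atTop |p.eval x|).and
    (Filter.eventually_gt_atTop x)).exists
  refine ⟨t, hxt, not_le.1 fun hle ↦ ?_⟩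
  have hlt := eval_lt_eval_of_derivative_pos hxt fun c hc ↦ h c hc.1
  have hlarge' : |p.eval x| < -p.eval t := by simpa [abs_of_nonpos hle] using hlarge
  linarith [neg_abs_le (p.eval x)]

end MeanValue

/-! ### Transfer of sign conditions across matched points -/

section Compare

open SignType

variable {α β : Type*} [LinearOrder α] [LinearOrder β]

theorem cmp_eq_cmp_iff_lt {x y : α} {x' y' : β} :
    cmp x y = cmp x' y' ↔ (x < y ↔ x' < y') ∧ (y < x ↔ y' < x') := by
  refine ⟨fun h ↦ ⟨lt_iff_lt_of_cmp_eq_cmp h, lt_iff_lt_of_cmp_eq_cmp (cmp_eq_cmp_symm.1 h)⟩,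
    fun ⟨hlt, hgt⟩ ↦ ?_⟩
  rcases lt_trichotomy x y with h | rfl | h
  · rw [h.cmp_eq_lt, (hlt.1 h).cmp_eq_lt]
  · rw [cmp_self_eq_eq, (le_antisymm (not_lt.1 fun h ↦ (hgt.2 h).false)
      (not_lt.1 fun h ↦ (hlt.2 h).false) : x' = y').cmp_eq_eq]
  · rw [h.cmp_eq_gt, (hgt.1 h).cmp_eq_gt]

theorem sign_eq_sign_iff_cmp [Zero α] [Zero β] {x : α} {y : β} :
    sign x = sign y ↔ cmp 0 x = cmp 0 y := by
  rw [cmp_eq_cmp_iff_lt]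
  refine ⟨fun h ↦ ⟨?_, ?_⟩, fun ⟨hpos, hneg⟩ ↦ ?_⟩
  · rw [← sign_eq_one_iff, h, sign_eq_one_iff]
  · rw [← sign_eq_neg_one_iff, h, sign_eq_neg_one_iff]
  · simp only [sign_apply, hpos, hneg]

theorem sign_eq_sign_iff [Zero α] [Zero β] {x : α} {y : β} :
    sign x = sign y ↔ (0 < x ↔ 0 < y) ∧ (x < 0 ↔ y < 0) :=
  sign_eq_sign_iff_cmp.trans cmp_eq_cmp_iff_lt

theorem pos_iff_of_sign_eq [Zero α] [Zero β] {x : α} {y : β} (h : sign x = sign y) :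
    0 < x ↔ 0 < y :=
  (sign_eq_sign_iff.1 h).1

theorem eq_zero_iff_of_sign_eq [Zero α] [Zero β] {x : α} {y : β} (h : sign x = sign y) :
    x = 0 ↔ y = 0 := by
  rw [← sign_eq_zero_iff, h, sign_eq_zero_iff]

end Compare

section SameCut

open Order (PartialIso)

variable {R S : Type*} [LinearOrder R] [LinearOrder S]

/-- `x : R` and `y : S` occupy the same position relative to the finitely many matched points of
the partial order isomorphism `G`. -/
def SameCut (G : PartialIso R S) (x : R) (y : S) : Prop :=
  ∀ g ∈ G.val, cmp g.1 x = cmp g.2 y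

variable {G : PartialIso R S} {x x' x'' : R} {y y' : S}

theorem exists_sameCut [DenselyOrdered S] [NoMinOrder S] [NoMaxOrder S] [Nonempty S]
    (G : PartialIso R S) (x : R) : ∃ y : S, SameCut G x y :=
  G.exists_across x

namespace SameCut

theorem lt_iff_lt (h : SameCut G x y) {g : R × S} (hg : g ∈ G.val) : g.1 < x ↔ g.2 < y :=
  lt_iff_lt_of_cmp_eq_cmp (h g hg)

theorem gt_iff_gt (h : SameCut G x y) {g : R × S} (hg : g ∈ G.val) : x < g.1 ↔ y < g.2 :=
  lt_iff_lt_of_cmp_eq_cmp (cmp_eq_cmp_symm.1 (h g hg))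

theorem eq_iff_eq (h : SameCut G x y) {g : R × S} (hg : g ∈ G.val) : g.1 = x ↔ g.2 = y :=
  eq_iff_eq_of_cmp_eq_cmp (h g hg)

theorem of_lt_iff (hlt : ∀ g ∈ G.val, g.1 < x ↔ g.2 < y) (hgt : ∀ g ∈ G.val, x < g.1 ↔ y < g.2) :
    SameCut G x y :=
  fun g hg ↦ cmp_eq_cmp_iff_lt.2 ⟨hlt g hg, hgt g hg⟩

theorem of_mem {g : R × S} (hg : g ∈ G.val) : SameCut G g.1 g.2 :=
  fun g' hg' ↦ G.2 g' hg' g hg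

theorem mem_comm {g : S × R} : g ∈ G.comm.val ↔ g.swap ∈ G.val := by
  change g ∈ Finset.image _ _ ↔ _
  rw [Finset.mem_image]
  exact ⟨by rintro ⟨g', hg', rfl⟩; exact hg', fun hg ↦ ⟨_, hg, rfl⟩⟩

theorem comm (h : SameCut G x y) : SameCut G.comm y x :=
  fun g hg ↦ (h g.swap (mem_comm.1 hg)).symm

theorem of_comm (h : SameCut G.comm y x) : SameCut G x y :=
  fun g hg ↦ (h g.swap (mem_comm.2 (by simpa using hg))).symm

theorem ordConnected (h : SameCut G x y) (h' : SameCut G x' y) (hx : x ≤ x'') (hx' : x'' ≤ x') :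
    SameCut G x'' y :=
  of_lt_iff
    (fun _ hg ↦ ⟨fun hlt ↦ (h'.lt_iff_lt hg).1 (hlt.trans_le hx'),
      fun hlt ↦ ((h.lt_iff_lt hg).2 hlt).trans_le hx⟩)
    (fun _ hg ↦ ⟨fun hlt ↦ (h.gt_iff_gt hg).1 (hx.trans_lt hlt),
      fun hlt ↦ hx'.trans_lt ((h'.gt_iff_gt hg).2 hlt)⟩)

theorem of_crossing (h : SameCut G x y) (h' : SameCut G x' y') (hx : x ≤ x') (hy : y' ≤ y) :
    SameCut G x y' :=
  of_lt_iff
    (fun _ hg ↦ ⟨fun hlt ↦ (h'.lt_iff_lt hg).1 (hlt.trans_le hx),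
      fun hlt ↦ (h.lt_iff_lt hg).2 (hlt.trans_le hy)⟩)
    (fun _ hg ↦ ⟨fun hlt ↦ hy.trans_lt ((h.gt_iff_gt hg).1 hlt),
      fun hlt ↦ hx.trans_lt ((h'.gt_iff_gt hg).2 hlt)⟩)

theorem eq_of_eq_fst {g : R × S} (hg : g ∈ G.val) (h : SameCut G x y) (h' : SameCut G x' y)
    (hx : g.1 = x) : x = x' :=
  hx.symm.trans ((h'.eq_iff_eq hg).2 ((h.eq_iff_eq hg).1 hx))

theorem extend_right (h : SameCut G x y) (hoff : ∀ g ∈ G.val, g.1 ≠ x) (hx : x ≤ x') (hy : y ≤ y')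
    (hright : ∀ g ∈ G.val, x < g.1 → x' < g.1 ∧ y' < g.2) : SameCut G x' y' := by
  intro g hg
  rcases (hoff g hg).lt_or_gt with hlt | hgt
  · rw [(hlt.trans_le hx).cmp_eq_lt, (((h.lt_iff_lt hg).1 hlt).trans_le hy).cmp_eq_lt]
  · rw [(hright g hg hgt).1.cmp_eq_gt, (hright g hg hgt).2.cmp_eq_gt]

theorem exists_right_end_or (h : SameCut G x y) (hoff : ∀ g ∈ G.val, g.1 ≠ x) :
    (∃ g ∈ G.val, x < g.1 ∧ y < g.2 ∧
      ∀ r s, x ≤ r → r < g.1 → y ≤ s → s < g.2 → SameCut G r s) ∨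
    ∀ r s, x ≤ r → y ≤ s → SameCut G r s := by
  classical
  rcases {g ∈ G.val | x < g.1}.eq_empty_or_nonempty with hempty | hne
  · refine .inr fun r s hr hs ↦ h.extend_right hoff hr hs fun g hg hgt ↦ ?_
    exact absurd (Finset.mem_filter.2 ⟨hg, hgt⟩) (hempty ▸ Finset.notMem_empty g)
  · obtain ⟨g, hg, hmin⟩ := Finset.exists_min_image _ Prod.fst hne
    simp only [Finset.mem_filter] at hg hmin
    refine .inl ⟨g, hg.1, hg.2, (h.gt_iff_gt hg.1).1 hg.2, fun r s hr hr' hs hs' ↦ ?_⟩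
    refine h.extend_right hoff hr hs fun g' hg' hgt ↦ ⟨hr'.trans_le (hmin g' ⟨hg', hgt⟩), ?_⟩
    exact hs'.trans_le ((le_iff_le_of_cmp_eq_cmp (G.2 g hg.1 g' hg')).1 (hmin g' ⟨hg', hgt⟩))

theorem exists_gt [NoMaxOrder R] (h : SameCut G x y) (hoff : ∀ g ∈ G.val, g.1 ≠ x) :
    ∃ t, x < t ∧ ∀ r, x ≤ r → r < t → SameCut G r y := by
  rcases h.exists_right_end_or hoff with ⟨g, -, hxg, hyg, hcell⟩ | hcell
  · exact ⟨g.1, hxg, fun r hr hr' ↦ hcell r y hr hr' le_rfl hyg⟩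
  · obtain ⟨t, ht⟩ := NoMaxOrder.exists_gt x
    exact ⟨t, ht, fun r hr _ ↦ hcell r y hr le_rfl⟩

end SameCut

/-- The partial isomorphism `{(-r, -s) | (r, s) ∈ G}`; it exchanges left and right. -/
def reflect [AddCommGroup R] [IsOrderedAddMonoid R] [AddCommGroup S] [IsOrderedAddMonoid S]
    (G : PartialIso R S) : PartialIso R S :=
  ⟨G.val.map (Equiv.neg (R × S)).toEmbedding, by
    intro g hg g' hg'
    rw [Finset.mem_map_equiv] at hg hg'
    simpa [cmp_eq_cmp_iff_lt, and_comm] using G.2 _ hg _ hg'⟩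

section reflect

variable [AddCommGroup R] [IsOrderedAddMonoid R] [AddCommGroup S] [IsOrderedAddMonoid S]

theorem mem_reflect {g : R × S} : g ∈ (reflect G).val ↔ -g ∈ G.val :=
  Finset.mem_map_equiv

theorem sameCut_reflect : SameCut (reflect G) x y ↔ SameCut G (-x) (-y) := by
  refine (Equiv.neg (R × S)).forall_congr fun {g} ↦ ?_
  rw [mem_reflect, Equiv.neg_apply]
  refine imp_congr_right fun _ ↦ ?_
  simp only [cmp_eq_cmp_iff_lt, Prod.fst_neg, Prod.snd_neg, neg_lt_neg_iff]
  exact and_comm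

end reflect

end SameCut

section Adapted

open Order (PartialIso)
open SignType

variable {R S : Type*} [Field R] [LinearOrder R] [Field S] [LinearOrder S]

/-- The partial isomorphism `G` is adapted to the nonconstant polynomials `a` and `b`: these have
the same sign at matched points, and their derivatives have the same sign at all pairs of points
cutting `G` in the same way. -/
structure Adapted (G : PartialIso R S) (a : R[X]) (b : S[X]) : Prop where
  sign_derivative {x : R} {y : S} (h : SameCut G x y) :
    sign (a.derivative.eval x) = sign (b.derivative.eval y)
  sign_eval {g : R × S} (hg : g ∈ G.val) : sign (a.eval g.1) = sign (b.eval g.2)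
  natDegree_left : 0 < a.natDegree
  natDegree_right : 0 < b.natDegree

namespace Adapted

variable {G : PartialIso R S} {a : R[X]} {b : S[X]} {x x' : R} {y y' : S}

theorem comm (H : Adapted G a b) : Adapted G.comm b a where
  sign_derivative h := (H.sign_derivative h.of_comm).symm
  sign_eval hg := (H.sign_eval (SameCut.mem_comm.1 hg)).symm
  natDegree_left := H.natDegree_right
  natDegree_right := H.natDegree_left

section

variable [IsStrictOrderedRing R]

theorem derivative_ne_zero (H : Adapted G a b) (h : SameCut G x y) (hoff : ∀ g ∈ G.val, g.1 ≠ x) :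
    a.derivative.eval x ≠ 0 := by
  intro hx
  have hy : b.derivative.eval y = 0 := (eq_zero_iff_of_sign_eq (H.sign_derivative h)).1 hx
  obtain ⟨t, hxt, hcell⟩ := h.exists_gt hoff
  have hzero : a.derivative = 0 := eq_zero_of_infinite_isRoot _ <|
    (Ioo_infinite hxt).mono fun r hr ↦
      (eq_zero_iff_of_sign_eq (H.sign_derivative (hcell r hr.1.le hr.2))).2 hy
  exact H.natDegree_left.ne' (derivative_eq_zero.1 hzero)

variable [PolynomialIVT R]

theorem eval_lt_eval (H : Adapted G a b) (h : SameCut G x y) (h' : SameCut G x' y)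
    (hx : x < x') (hb : 0 < b.derivative.eval y) : a.eval x < a.eval x' :=
  eval_lt_eval_of_derivative_pos hx fun _ hc ↦
    (pos_iff_of_sign_eq (H.sign_derivative (h.ordConnected h' hc.1.le hc.2.le))).2 hb

theorem root_unique (H : Adapted G a b) (h : SameCut G x y) (h' : SameCut G x' y)
    (hx : a.eval x = 0) (hx' : a.eval x' = 0) : x = x' := by
  wlog hlt : x < x' generalizing x x'
  · rcases (not_lt.1 hlt).eq_or_lt with heq | hgt
    · exact heq.symm
    · exact (this h' h hx' hx hgt).symm
  exfalso
  obtain ⟨c, hc, hroot⟩ := exists_derivative_root_between_roots hlt hx hx'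
  have hcut := h.ordConnected h' hc.1.le hc.2.le
  exact H.derivative_ne_zero hcut
    (fun g hg heq ↦ hc.1.ne' (hcut.eq_of_eq_fst hg h heq)) hroot

theorem root_lt_root (H : Adapted G a b) (h : SameCut G x y) (h' : SameCut G x' y')
    (hx : a.eval x = 0) (hx' : a.eval x' = 0) (hlt : x < x') : y < y' := by
  by_contra! hle
  exact hlt.ne (H.root_unique (h.of_crossing h' hlt.le hle) h' hx hx')

end

variable [IsStrictOrderedRing R] [IsStrictOrderedRing S]

theorem neg (H : Adapted G a b) : Adapted G (-a) (-b) where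
  sign_derivative h := by
    simp only [derivative_neg, eval_neg, Left.sign_neg, H.sign_derivative h]
  sign_eval hg := by simp only [eval_neg, Left.sign_neg, H.sign_eval hg]
  natDegree_left := by simpa using H.natDegree_left
  natDegree_right := by simpa using H.natDegree_right

theorem reflect (H : Adapted G a b) : Adapted (reflect G) (a.comp (-X)) (b.comp (-X)) where
  sign_derivative h := by
    simpa [derivative_comp, Left.sign_neg] using H.sign_derivative (sameCut_reflect.1 h)
  sign_eval hg := by simpa using H.sign_eval (mem_reflect.1 hg)
  natDegree_left := by simpa [natDegree_comp] using H.natDegree_left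
  natDegree_right := by simpa [natDegree_comp] using H.natDegree_right

variable [PolynomialIVT R] [PolynomialIVT S]

theorem exists_gt_eval_pos (H : Adapted G a b) (h : SameCut G x y)
    (hoff : ∀ g ∈ G.val, g.1 ≠ x) (hder : 0 < a.derivative.eval x) (hx : 0 ≤ a.eval x) :
    ∃ t, y < t ∧ 0 < b.eval t ∧ ∀ s, y ≤ s → s < t → SameCut G x s := by
  have hder' : 0 < b.derivative.eval y := (pos_iff_of_sign_eq (H.sign_derivative h)).1 hder
  rcases h.exists_right_end_or hoff with ⟨g, hg, hxg, hyg, hcell⟩ | hcell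
  · refine ⟨g.2, hyg, (pos_iff_of_sign_eq (H.sign_eval hg)).1 (hx.trans_lt ?_),
      fun s hs hs' ↦ hcell x s le_rfl hxg hs hs'⟩
    exact eval_lt_eval_of_derivative_pos hxg fun c hc ↦
      (pos_iff_of_sign_eq (H.sign_derivative (hcell c y hc.1.le hc.2 le_rfl hyg))).2 hder'
  · obtain ⟨t, ht, hpos⟩ := exists_gt_eval_pos_of_derivative_pos H.natDegree_right (x := y)
      fun s hs ↦ (pos_iff_of_sign_eq (H.sign_derivative (hcell x s le_rfl hs.le))).1 hder
    exact ⟨t, ht, hpos, fun s hs _ ↦ hcell x s le_rfl hs⟩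

theorem exists_lt_eval_neg (H : Adapted G a b) (h : SameCut G x y)
    (hoff : ∀ g ∈ G.val, g.1 ≠ x) (hder : 0 < a.derivative.eval x) (hx : a.eval x ≤ 0) :
    ∃ t, t < y ∧ b.eval t < 0 ∧ ∀ s, t < s → s ≤ y → SameCut G x s := by
  obtain ⟨t, ht, hpos, hcell⟩ := H.reflect.neg.exists_gt_eval_pos (x := -x) (y := -y)
    (sameCut_reflect.2 (by simpa using h))
    (fun g hg heq ↦ hoff _ (mem_reflect.1 hg) (by simp [heq]))
    (by simpa [derivative_comp] using hder) (by simpa using hx)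
  refine ⟨-t, neg_lt.1 ht, by simpa using hpos, fun s hs hs' ↦ ?_⟩
  simpa using sameCut_reflect.1 (hcell (-s) (neg_le_neg hs') (neg_lt.1 hs))

theorem exists_root_sameCut (H : Adapted G a b) (h : SameCut G x y) (hx : a.eval x = 0) :
    ∃ s, b.eval s = 0 ∧ SameCut G x s := by
  by_cases hoff : ∀ g ∈ G.val, g.1 ≠ x
  · wlog hder : 0 < a.derivative.eval x generalizing a b
    · have hneg := (H.derivative_ne_zero h hoff).lt_of_le (not_lt.1 hder)
      simpa using this H.neg (by simpa using hx) (by simpa using hneg)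
    obtain ⟨t, hyt, hpos, hright⟩ := H.exists_gt_eval_pos h hoff hder hx.ge
    obtain ⟨t', hty, hneg, hleft⟩ := H.exists_lt_eval_neg h hoff hder hx.le
    obtain ⟨s, hs, hroot⟩ :=
      PolynomialIVT.exists_root (hty.trans hyt) (mul_neg_of_neg_of_pos hneg hpos)
    refine ⟨s, hroot, ?_⟩
    rcases le_total s y with hle | hle
    · exact hleft s hs.1 hle
    · exact hright s hle hs.2
  · push Not at hoff
    obtain ⟨g, hg, rfl⟩ := hoff
    exact ⟨g.2, (eq_zero_iff_of_sign_eq (H.sign_eval hg)).1 hx, .of_mem hg⟩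

theorem eval_pos_of_derivative_pos (H : Adapted G a b) (h : SameCut G x y)
    (hoff : ∀ g ∈ G.val, g.1 ≠ x) (hder : 0 < a.derivative.eval x)
    (hcut : ∀ r s, a.eval r = 0 → b.eval s = 0 → SameCut G r s → cmp r x = cmp s y)
    (hx : 0 < a.eval x) : 0 < b.eval y := by
  by_contra! hle
  obtain ⟨t, hyt, hpos, hcell⟩ := H.exists_gt_eval_pos h hoff hder hx.le
  obtain ⟨s, hys, hst, hroot⟩ : ∃ s, y ≤ s ∧ s < t ∧ b.eval s = 0 := by
    rcases hle.eq_or_lt with heq | hlt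
    · exact ⟨y, le_rfl, hyt, heq⟩
    · obtain ⟨s, hs, hroot⟩ := PolynomialIVT.exists_root hyt (mul_neg_of_neg_of_pos hlt hpos)
      exact ⟨s, hs.1.le, hs.2, hroot⟩
  have hxs : SameCut G x s := hcell s hys hst
  obtain ⟨r, hr, hsr⟩ := H.comm.exists_root_sameCut hxs.comm hroot
  have hrs : SameCut G r s := hsr.of_comm
  have hxr : x ≤ r :=
    (le_iff_le_of_cmp_eq_cmp (cmp_eq_cmp_symm.1 (hcut r s hr hroot hrs))).2 hys
  have hder' : 0 < b.derivative.eval s := (pos_iff_of_sign_eq (H.sign_derivative hxs)).1 hder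
  have hxr' : x < r := hxr.lt_of_ne fun heq ↦ hx.ne' (heq ▸ hr)
  exact (hx.trans (H.eval_lt_eval hxs hrs hxr' hder')).ne' hr

theorem eval_pos (H : Adapted G a b) (h : SameCut G x y) (hoff : ∀ g ∈ G.val, g.1 ≠ x)
    (hcut : ∀ r s, a.eval r = 0 → b.eval s = 0 → SameCut G r s → cmp r x = cmp s y)
    (hx : 0 < a.eval x) : 0 < b.eval y := by
  rcases (H.derivative_ne_zero h hoff).lt_or_gt with hder | hder
  · have hpos := H.reflect.eval_pos_of_derivative_pos (x := -x) (y := -y)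
      (sameCut_reflect.2 (by simpa using h))
      (fun g hg heq ↦ hoff _ (mem_reflect.1 hg) (by simp [heq]))
      (by simpa [derivative_comp] using hder)
      (fun r s hr hs hrs ↦ ?_) (by simpa using hx)
    · simpa using hpos
    · have hcmp := hcut (-r) (-s) (by simpa using hr) (by simpa using hs) (sameCut_reflect.1 hrs)
      simpa [cmp_eq_cmp_iff_lt, neg_lt, lt_neg, and_comm] using hcmp
  · exact H.eval_pos_of_derivative_pos h hoff hder hcut hx

theorem sign_eval_eq (H : Adapted G a b) (h : SameCut G x y)
    (hcut : ∀ r s, a.eval r = 0 → b.eval s = 0 → SameCut G r s → cmp r x = cmp s y) :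
    sign (a.eval x) = sign (b.eval y) := by
  by_cases hoff : ∀ g ∈ G.val, g.1 ≠ x
  · have hoff' : ∀ g ∈ G.comm.val, g.1 ≠ y := fun g hg heq ↦
      hoff _ (SameCut.mem_comm.1 hg) ((h.eq_iff_eq (SameCut.mem_comm.1 hg)).2 heq)
    have hcut' : ∀ s r, b.eval s = 0 → a.eval r = 0 → SameCut G.comm s r → cmp s y = cmp r x :=
      fun s r hs hr hsr ↦ (hcut r s hr hs hsr.of_comm).symm
    refine sign_eq_sign_iff.2 ⟨⟨H.eval_pos h hoff hcut, H.comm.eval_pos h.comm hoff' hcut'⟩, ?_⟩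
    have hneg := H.neg.eval_pos h hoff (by simpa using hcut)
    have hneg' := H.neg.comm.eval_pos h.comm hoff' (by simpa using hcut')
    exact ⟨by simpa using hneg, by simpa using hneg'⟩
  · push Not at hoff
    obtain ⟨g, hg, rfl⟩ := hoff
    rw [← (h.eq_iff_eq hg).1 rfl]
    exact H.sign_eval hg

theorem cmp_roots (H : Adapted G a b) (h : SameCut G x y) (h' : SameCut G x' y')
    (hx : a.eval x = 0) (hx' : a.eval x' = 0) (hy : b.eval y = 0) (hy' : b.eval y' = 0) :
    cmp x x' = cmp y y' :=
  cmp_eq_cmp_iff_lt.2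
    ⟨⟨H.root_lt_root h h' hx hx', H.comm.root_lt_root h.comm h'.comm hy hy'⟩,
      ⟨H.root_lt_root h' h hx' hx, H.comm.root_lt_root h'.comm h.comm hy' hy⟩⟩

/- `G'` matches, in addition, the roots of `a` with the roots of `b` in the same cell of `G`. -/
theorem exists_refinement (H : Adapted G a b) :
    ∃ G' : PartialIso R S, G.val ⊆ G'.val ∧
      (∀ g ∈ G'.val, g ∈ G.val ∨ a.eval g.1 = 0 ∧ b.eval g.2 = 0) ∧
      ∀ x y, SameCut G' x y → sign (a.eval x) = sign (b.eval y) := by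
  classical
  have ha : a ≠ 0 := ne_zero_of_natDegree_gt H.natDegree_left
  have hb : b ≠ 0 := ne_zero_of_natDegree_gt H.natDegree_right
  set N := {g ∈ a.roots.toFinset ×ˢ b.roots.toFinset | SameCut G g.1 g.2}
  have mem_N {g : R × S} : g ∈ N ↔ (a.eval g.1 = 0 ∧ b.eval g.2 = 0) ∧ SameCut G g.1 g.2 := by
    simp [N, ha, hb]
  have hmono : ∀ g ∈ G.val ∪ N, ∀ g' ∈ G.val ∪ N, cmp g.1 g'.1 = cmp g.2 g'.2 := by
    intro g hg g' hg'
    rcases Finset.mem_union.1 hg with hg | hg <;> rcases Finset.mem_union.1 hg' with hg' | hg'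
    · exact G.2 g hg g' hg'
    · exact (mem_N.1 hg').2 g hg
    · exact cmp_eq_cmp_symm.1 ((mem_N.1 hg).2 g' hg')
    · obtain ⟨⟨hx, hy⟩, h⟩ := mem_N.1 hg
      obtain ⟨⟨hx', hy'⟩, h'⟩ := mem_N.1 hg'
      exact H.cmp_roots h h' hx hx' hy hy'
  refine ⟨⟨G.val ∪ N, hmono⟩, Finset.subset_union_left, fun g hg ↦ ?_, fun x y h ↦ ?_⟩
  · exact (Finset.mem_union.1 hg).imp_right fun hg ↦ (mem_N.1 hg).1
  · exact H.sign_eval_eq (fun g hg ↦ h g (Finset.mem_union_left N hg)) fun r s hr hs hrs ↦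
      h (r, s) (Finset.mem_union_right G.val (mem_N.2 ⟨⟨hr, hs⟩, hrs⟩))

end Adapted

end Adapted

theorem exists_superset_closed_of_lt {α : Type*} (d : α → ℕ) (op : α → α → Finset α)
    (hop : ∀ p q, ∀ r ∈ op p q, d r < d p ∧ d r < d q) (Q : Finset α) :
    ∃ s : Finset α, Q ⊆ s ∧ ∀ p ∈ s, ∀ q ∈ s, op p q ⊆ s := by
  classical
  suffices key : ∀ (n : ℕ) (s t : Finset α), s ⊆ t → (∀ r ∈ t, r ∉ s → d r < n) →
      (∀ p ∈ s, ∀ q ∈ s, op p q ⊆ t) → ∃ u, t ⊆ u ∧ ∀ p ∈ u, ∀ q ∈ u, op p q ⊆ u from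
    key (Q.sup d + 1) ∅ Q (Finset.empty_subset Q)
      (fun _ hr _ ↦ Nat.lt_succ_of_le (Finset.le_sup hr)) (by simp)
  intro n
  induction n with
  | zero =>
    intro s t hst hnew hop_mem
    obtain rfl : s = t := hst.antisymm fun r hr ↦ not_not.1 fun hrs ↦ (hnew r hr hrs).not_ge bot_le
    exact ⟨s, le_rfl, hop_mem⟩
  | succ n ih =>
    intro s t _ hnew hop_mem
    have hsub : ∀ p ∈ t, ∀ q ∈ t, op p q ⊆ t ∪ (t ×ˢ t).biUnion fun pq ↦ op pq.1 pq.2 :=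
      fun p hp q hq r hr ↦ Finset.mem_union_right t <|
        Finset.mem_biUnion.2 ⟨(p, q), Finset.mk_mem_product hp hq, hr⟩
    suffices hnew' : ∀ r ∈ t ∪ (t ×ˢ t).biUnion fun pq ↦ op pq.1 pq.2, r ∉ t → d r < n by
      obtain ⟨u, htu, hu⟩ := ih t _ Finset.subset_union_left hnew' hsub
      exact ⟨u, Finset.subset_union_left.trans htu, hu⟩
    intro r hr hrt
    obtain ⟨⟨p, q⟩, hpq, hrpq⟩ :=
      Finset.mem_biUnion.1 ((Finset.mem_union.1 hr).resolve_left hrt)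
    obtain ⟨hp, hq⟩ := Finset.mem_product.1 hpq
    obtain ⟨hrp, hrq⟩ := hop p q r hrpq
    by_cases hps : p ∈ s
    · by_cases hqs : q ∈ s
      · exact absurd (hop_mem p hps q hqs hrpq) hrt
      · exact hrq.trans_le (Nat.lt_succ_iff.1 (hnew q hq hqs))
    · exact hrp.trans_le (Nat.lt_succ_iff.1 (hnew p hp hps))

section PseudoDivision

variable {B R : Type*} [CommRing B] [Field R]

theorem exists_natDegree_sub_mul_lt (φ : B →+* R) {p q : B[X]} (hq : 0 < (q.map φ).natDegree)
    (hqp : (q.map φ).natDegree ≤ (p.map φ).natDegree) :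
    ∃ (a : B) (v : B[X]), φ a ≠ 0 ∧
      ((C (a ^ 2) * p - v * q).map φ).natDegree < (p.map φ).natDegree := by
  set k := (q.map φ).natDegree with hk
  set n := (p.map φ).natDegree
  set a := q.coeff k
  set b := p.coeff n
  have hqlead : (q.map φ).leadingCoeff = φ a := coeff_map φ k
  have hplead : (p.map φ).leadingCoeff = φ b := coeff_map φ n
  have ha : φ a ≠ 0 := hqlead ▸ leadingCoeff_ne_zero.2 (ne_zero_of_natDegree_gt hq)
  have hb : φ b ≠ 0 := hplead ▸ leadingCoeff_ne_zero.2 (ne_zero_of_natDegree_gt (hq.trans_le hqp))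
  refine ⟨a, C (a * b) * X ^ (n - k), ha, ?_⟩
  set f := (C (a ^ 2) * p).map φ with hf
  set g := (C (a * b) * X ^ (n - k) * q).map φ with hg
  have hfdeg : f.natDegree = n := by
    rw [hf, Polynomial.map_mul, map_C, natDegree_C_mul (by simpa using ha)]
  have hgdeg : g.natDegree = n := by
    rw [hg, mul_assoc, Polynomial.map_mul, map_C, natDegree_C_mul (by simp [ha, hb]),
      Polynomial.map_mul, Polynomial.map_pow, map_X,
      natDegree_X_pow_mul _ (ne_zero_of_natDegree_gt hq), ← hk, Nat.add_sub_cancel' hqp]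
  have hf0 : f ≠ 0 := ne_zero_of_natDegree_gt (hfdeg ▸ hq.trans_le hqp)
  have hg0 : g ≠ 0 := ne_zero_of_natDegree_gt (hgdeg ▸ hq.trans_le hqp)
  have hlead : f.leadingCoeff = g.leadingCoeff := by
    simp only [hf, hg, Polynomial.map_mul, map_C, Polynomial.map_pow, map_X, leadingCoeff_mul,
      leadingCoeff_pow, leadingCoeff_C, leadingCoeff_X, hqlead, hplead, map_mul, map_pow]
    ring
  have hdeg : f.degree = g.degree := by
    rw [degree_eq_natDegree hf0, degree_eq_natDegree hg0, hfdeg, hgdeg]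
  rw [Polynomial.map_sub, ← hf, ← hg]
  rcases eq_or_ne (f - g) 0 with hfg | hfg
  · rw [hfg, natDegree_zero]
    exact hq.trans_le hqp
  · rw [← hfdeg]
    exact natDegree_lt_natDegree hfg (degree_sub_lt_left hdeg hf0 hlead)

theorem natDegree_map_derivative_lt [CharZero R] {φ : B →+* R} {q : B[X]}
    (hq : 0 < (q.map φ).natDegree) : ((derivative q).map φ).natDegree < (q.map φ).natDegree := by
  rw [← derivative_map]
  exact natDegree_derivative_lt hq.ne'

theorem exists_pseudoDivision [LinearOrder R] [IsStrictOrderedRing R] (φ : B →+* R) {q : B[X]}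
    (hq : 0 < (q.map φ).natDegree) (p : B[X]) :
    ∃ (c : B) (u r : B[X]), C c * p = u * q + r ∧ 0 < φ c ∧
      (r.map φ).natDegree < (q.map φ).natDegree := by
  induction hn : (p.map φ).natDegree using Nat.strong_induction_on generalizing p with
  | _ n ih =>
    rcases lt_or_ge n (q.map φ).natDegree with hlt | hge
    · exact ⟨1, 0, p, by simp, by simp, hn ▸ hlt⟩
    · obtain ⟨a, v, ha, hlt⟩ := exists_natDegree_sub_mul_lt φ hq (hn ▸ hge)
      obtain ⟨c, u, r, heq, hc, hr⟩ := ih _ (hn ▸ hlt) _ rfl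
      refine ⟨c * a ^ 2, u + C c * v, r, ?_, ?_, hr⟩
      · rw [C_mul]
        linear_combination heq
      · rw [map_mul, map_pow]
        exact mul_pos hc (sq_pos_of_ne_zero ha)

end PseudoDivision

section SignClosed

open Order (PartialIso)
open SignType

variable {B R S : Type*} [CommRing B] [Field R] [LinearOrder R] [Field S] [LinearOrder S]

/-- A finite set `s` of polynomials stable, in the sense of the degree after applying `φ`, under
derivatives and pseudo-remainders. The set `D` records the elements of the base ring whose signs
control those of the members of `s`. -/
structure SignClosed (φ : B →+* R) (D : Set B) (s : Finset B[X]) : Prop where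
  coeff_mem {p : B[X]} (hp : p ∈ s) (i : ℕ) : p.coeff i ∈ D
  derivative_mem {q : B[X]} (hq : q ∈ s) (hdeg : 0 < (q.map φ).natDegree) : derivative q ∈ s
  exists_rem {p q : B[X]} (hp : p ∈ s) (hq : q ∈ s) (hdeg : 0 < (q.map φ).natDegree)
    (hle : (q.map φ).natDegree ≤ (p.map φ).natDegree) :
    ∃ c ∈ D, ∃ u, ∃ r ∈ s, C c * p = u * q + r ∧ 0 < φ c ∧
      (r.map φ).natDegree < (q.map φ).natDegree

theorem SignClosed.of_insert [CharZero R] [DecidableEq B[X]] {φ : B →+* R} {D : Set B}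
    {a : B[X]} {t : Finset B[X]} (hs : SignClosed φ D (insert a t))
    (hmax : ∀ q ∈ t, (q.map φ).natDegree ≤ (a.map φ).natDegree) : SignClosed φ D t := by
  have mem_of_lt {q r : B[X]} (hq : q ∈ t) (hr : r ∈ insert a t)
      (hlt : (r.map φ).natDegree < (q.map φ).natDegree) : r ∈ t :=
    Finset.mem_of_mem_insert_of_ne hr fun h ↦ (h ▸ hlt).not_ge (hmax q hq)
  refine ⟨fun hp ↦ hs.coeff_mem (Finset.mem_insert_of_mem hp), fun hq hdeg ↦ ?_,
    fun hp hq hdeg hle ↦ ?_⟩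
  · exact mem_of_lt hq (hs.derivative_mem (Finset.mem_insert_of_mem hq) hdeg)
      (natDegree_map_derivative_lt hdeg)
  · obtain ⟨c, hc, u, r, hr, heq, hpos, hlt⟩ :=
      hs.exists_rem (Finset.mem_insert_of_mem hp) (Finset.mem_insert_of_mem hq) hdeg hle
    exact ⟨c, hc, u, r, mem_of_lt hq hr hlt, heq, hpos, hlt⟩

theorem exists_signClosed [IsStrictOrderedRing R] (φ : B →+* R) (Q : Finset B[X]) :
    ∃ (D : Set B) (s : Finset B[X]), D.Finite ∧ Q ⊆ s ∧ SignClosed φ D s := by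
  classical
  set d : B[X] → ℕ := fun p ↦ (p.map φ).natDegree
  have hdiv : ∀ q p : B[X], ∃ (c : B) (u r : B[X]), 0 < d q →
      C c * p = u * q + r ∧ 0 < φ c ∧ d r < d q := by
    intro q p
    by_cases hq : 0 < d q
    · obtain ⟨c, u, r, h⟩ := exists_pseudoDivision φ hq p
      exact ⟨c, u, r, fun _ ↦ h⟩
    · exact ⟨0, 0, 0, fun h ↦ absurd h hq⟩
  choose c u r hdiv using hdiv
  set op : B[X] → B[X] → Finset B[X] :=
    fun p q ↦ if 0 < d q ∧ d q ≤ d p then {derivative q, r q p} else ∅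
  have hop : ∀ p q, ∀ f ∈ op p q, d f < d p ∧ d f < d q := by
    intro p q f hf
    obtain ⟨⟨hpos, hle⟩, hf⟩ : (0 < d q ∧ d q ≤ d p) ∧ (f = derivative q ∨ f = r q p) := by
      rcases em (0 < d q ∧ d q ≤ d p) with h | h
      · exact ⟨h, by simpa [op, h] using hf⟩
      · simp [op, h] at hf
    have hlt : d f < d q := by
      rcases hf with rfl | rfl
      · exact natDegree_map_derivative_lt hpos
      · exact (hdiv q p hpos).2.2
    exact ⟨hlt.trans_le hle, hlt⟩
  obtain ⟨s, hQs, hs⟩ := exists_superset_closed_of_lt d op hop Q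
  refine ⟨⋃ p ∈ s, range p.coeff ∪ ⋃ q ∈ s, {c q p}, s, ?_, hQs, ⟨?_, ?_, ?_⟩⟩
  · refine s.finite_toSet.biUnion fun p _ ↦ .union ?_ (s.finite_toSet.biUnion fun q _ ↦
      finite_singleton _)
    refine (p.coeffs.finite_toSet.insert 0).subset (range_subset_iff.2 fun i ↦ ?_)
    exact or_iff_not_imp_left.2 coeff_mem_coeffs
  · exact fun hp i ↦ mem_biUnion hp (.inl (mem_range_self i))
  · exact fun {q} hq hdeg ↦ hs q hq q hq (by simp [op, show 0 < d q from hdeg])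
  · intro p q hp hq hdeg hle
    refine ⟨c q p, mem_biUnion hp (.inr (mem_biUnion hq rfl)), u q p, r q p, ?_, hdiv q p hdeg⟩
    exact hs p hp q hq (by simp [op, show 0 < d q from hdeg, show d q ≤ d p from hle])

/-- A partial isomorphism along which the members of `t`, mapped through `φ` and `ψ`, have equal
signs, all matched points being roots of nonconstant members of `t`. -/
structure SignMatching (φ : B →+* R) (ψ : B →+* S) (t : Finset B[X]) (G : PartialIso R S) :
    Prop where
  sign_eval {x : R} {y : S} (h : SameCut G x y) {q : B[X]} (hq : q ∈ t) :
    sign ((q.map φ).eval x) = sign ((q.map ψ).eval y)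
  exists_root {g : R × S} (hg : g ∈ G.val) :
    ∃ q ∈ t, 0 < (q.map φ).natDegree ∧ (q.map φ).eval g.1 = 0

theorem natDegree_map_eq_of_sign_eq {φ : B →+* R} {ψ : B →+* S} {p : B[X]}
    (h : ∀ i, sign (φ (p.coeff i)) = sign (ψ (p.coeff i))) :
    (p.map φ).natDegree = (p.map ψ).natDegree := by
  have hsupp : (p.map φ).support = (p.map ψ).support := by
    ext i
    simp only [mem_support_iff, coeff_map, ne_eq, eq_zero_iff_of_sign_eq (h i)]
  exact natDegree_eq_of_degree_eq (congrArg Finset.max hsupp)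

variable [IsStrictOrderedRing R] [IsStrictOrderedRing S] {φ : B →+* R} {ψ : B →+* S}

theorem sign_eval_eq_of_pseudoDivision {p q u r : B[X]} {c : B} (heq : C c * p = u * q + r)
    (hφ : 0 < φ c) (hψ : 0 < ψ c) {x : R} {y : S} (hx : (q.map φ).eval x = 0)
    (hy : (q.map ψ).eval y = 0) (hr : sign ((r.map φ).eval x) = sign ((r.map ψ).eval y)) :
    sign ((p.map φ).eval x) = sign ((p.map ψ).eval y) := by
  have hφr : φ c * (p.map φ).eval x = (r.map φ).eval x := by
    simpa [hx] using congrArg (fun f ↦ (f.map φ).eval x) heq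
  have hψr : ψ c * (p.map ψ).eval y = (r.map ψ).eval y := by
    simpa [hy] using congrArg (fun f ↦ (f.map ψ).eval y) heq
  rwa [← hφr, ← hψr, sign_mul, sign_mul, sign_pos hφ, sign_pos hψ, one_mul, one_mul] at hr

namespace SignMatching

variable {D : Set B} {a : B[X]} {t : Finset B[X]} {G : PartialIso R S}

theorem adapted [DecidableEq B[X]] (hG : SignMatching φ ψ t G)
    (hs : SignClosed φ D (insert a t)) (hD : ∀ c ∈ D, sign (φ c) = sign (ψ c))
    (hmax : ∀ q ∈ t, (q.map φ).natDegree ≤ (a.map φ).natDegree)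
    (ha : 0 < (a.map φ).natDegree) : Adapted G (a.map φ) (a.map ψ) := by
  have hat : a ∈ insert a t := Finset.mem_insert_self a t
  refine ⟨fun h ↦ ?_, fun {g} hg ↦ ?_, ha,
    natDegree_map_eq_of_sign_eq (fun i ↦ hD _ (hs.coeff_mem hat i)) ▸ ha⟩
  · rw [derivative_map, derivative_map]
    refine hG.sign_eval h (Finset.mem_of_mem_insert_of_ne (hs.derivative_mem hat ha) fun heq ↦ ?_)
    exact (natDegree_map_derivative_lt ha).ne (by rw [heq])
  · have hcut : SameCut G g.1 g.2 := .of_mem hg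
    obtain ⟨q, hq, hdeg, hroot⟩ := hG.exists_root hg
    have hroot' : (q.map ψ).eval g.2 = 0 := (eq_zero_iff_of_sign_eq (hG.sign_eval hcut hq)).1 hroot
    obtain ⟨c, hc, u, r, hr, heq, hpos, hlt⟩ :=
      hs.exists_rem hat (Finset.mem_insert_of_mem hq) hdeg (hmax q hq)
    have hrt : r ∈ t :=
      Finset.mem_of_mem_insert_of_ne hr fun h ↦ (h ▸ hlt).not_ge (hmax q hq)
    exact sign_eval_eq_of_pseudoDivision heq hpos ((pos_iff_of_sign_eq (hD c hc)).1 hpos)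
      hroot hroot' (hG.sign_eval hcut hrt)

theorem exists_insert [PolynomialIVT R] [PolynomialIVT S] [DecidableEq B[X]]
    (hG : SignMatching φ ψ t G) (hs : SignClosed φ D (insert a t))
    (hD : ∀ c ∈ D, sign (φ c) = sign (ψ c))
    (hmax : ∀ q ∈ t, (q.map φ).natDegree ≤ (a.map φ).natDegree) :
    ∃ G' : PartialIso R S, SignMatching φ ψ (insert a t) G' := by
  have hcoeff : ∀ i, sign (φ (a.coeff i)) = sign (ψ (a.coeff i)) := fun i ↦
    hD _ (hs.coeff_mem (Finset.mem_insert_self a t) i)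
  rcases Nat.eq_zero_or_pos (a.map φ).natDegree with ha | ha
  · refine ⟨G, fun h q hq ↦ ?_, fun hg ↦ ?_⟩
    · rcases Finset.mem_insert.1 hq with rfl | hq
      · rw [eq_C_of_natDegree_eq_zero ha,
          eq_C_of_natDegree_eq_zero ((natDegree_map_eq_of_sign_eq hcoeff).symm.trans ha)]
        simpa using hcoeff 0
      · exact hG.sign_eval h hq
    · obtain ⟨q, hq, h⟩ := hG.exists_root hg
      exact ⟨q, Finset.mem_insert_of_mem hq, h⟩
  · obtain ⟨G', hsub, hmem, hsign⟩ := (hG.adapted hs hD hmax ha).exists_refinement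
    refine ⟨G', fun h q hq ↦ ?_, fun hg ↦ ?_⟩
    · rcases Finset.mem_insert.1 hq with rfl | hq
      · exact hsign _ _ h
      · exact hG.sign_eval (fun g hg ↦ h g (hsub hg)) hq
    · rcases hmem _ hg with hg | ⟨hroot, -⟩
      · obtain ⟨q, hq, h⟩ := hG.exists_root hg
        exact ⟨q, Finset.mem_insert_of_mem hq, h⟩
      · exact ⟨a, Finset.mem_insert_self a t, ha, hroot⟩

end SignMatching

theorem SignClosed.exists_signMatching [PolynomialIVT R] [PolynomialIVT S] {D : Set B}
    {s : Finset B[X]} (hs : SignClosed φ D s) (hD : ∀ c ∈ D, sign (φ c) = sign (ψ c)) :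
    ∃ G : PartialIso R S, SignMatching φ ψ s G := by
  classical
  induction s using Finset.induction_on_max_value (f := fun p : B[X] ↦ (p.map φ).natDegree) with
  | empty => exact ⟨default, fun _ _ hq ↦ absurd hq (Finset.notMem_empty _),
      fun hg ↦ absurd hg (Finset.notMem_empty _)⟩
  | insert a t _ hmax ih =>
    obtain ⟨G, hG⟩ := ih (hs.of_insert hmax)
    exact hG.exists_insert hs hD hmax

/- Elimination of one variable, in the style of Tarski and Seidenberg. -/
theorem exists_finite_forall_exists_sign_eval_eq [PolynomialIVT R] [PolynomialIVT S]
    (φ : B →+* R) (Q : Finset B[X]) :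
    ∃ D : Set B, D.Finite ∧ ∀ ψ : B →+* S, (∀ c ∈ D, sign (φ c) = sign (ψ c)) →
      ∀ x : R, ∃ y : S, ∀ q ∈ Q, sign ((q.map φ).eval x) = sign ((q.map ψ).eval y) := by
  obtain ⟨D, s, hfin, hQs, hs⟩ := exists_signClosed φ Q
  refine ⟨D, hfin, fun ψ hD x ↦ ?_⟩
  obtain ⟨G, hG⟩ := hs.exists_signMatching hD
  obtain ⟨y, hy⟩ := exists_sameCut G x
  exact ⟨y, fun q hq ↦ hG.sign_eval hy (hQs hq)⟩

end SignClosed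

/-! ### The Artin–Lang theorem -/

section ArtinLang

open SignType

/-- Every finite system of sign conditions on elements of `B` that is realised by an `R`-valued
point of the `ℝ`-algebra `B` is realised by a real point. -/
def ReflectsSigns (B R : Type*) [CommRing B] [Algebra ℝ B] [Field R] [LinearOrder R]
    [Algebra ℝ R] : Prop :=
  ∀ (φ : B →ₐ[ℝ] R) (D : Set B), D.Finite →
    ∃ χ : B →ₐ[ℝ] ℝ, ∀ c ∈ D, sign (φ c) = sign (χ c)

variable {B A R : Type*} [CommRing B] [Algebra ℝ B] [CommRing A] [Algebra ℝ A]
  [Field R] [LinearOrder R] [Algebra ℝ R]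

theorem ReflectsSigns.of_surjective [IsNoetherianRing B] (h : ReflectsSigns B R)
    (f : B →ₐ[ℝ] A) (hf : Function.Surjective f) : ReflectsSigns A R := by
  intro φ D hD
  obtain ⟨K, hK⟩ := (isNoetherianRing_iff_ideal_fg B).1 ‹_› (RingHom.ker f)
  obtain ⟨g, hg⟩ := hf.hasRightInverse
  obtain ⟨χ, hχ⟩ := h (φ.comp f) (g '' D ∪ K) ((hD.image g).union K.finite_toSet)
  have hker : RingHom.ker f.toRingHom ≤ RingHom.ker χ.toRingHom := by
    refine (show RingHom.ker f.toRingHom = Ideal.span K from hK.symm).trans_le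
      (Ideal.span_le.2 fun c hc ↦ ?_)
    have hfc : f c = 0 := (hK ▸ Ideal.subset_span hc : c ∈ RingHom.ker f)
    exact (eq_zero_iff_of_sign_eq (hχ c (.inr hc))).1 (by simp [hfc])
  refine ⟨AlgHom.liftOfSurjective f hf χ hker, fun a ha ↦ ?_⟩
  have hχa := AlgHom.liftOfSurjective_apply f hf χ hker (g a)
  rw [hg a] at hχa
  rw [hχa, ← hχ (g a) (.inl (mem_image_of_mem g ha)), AlgHom.comp_apply, hg a]

variable [IsStrictOrderedRing R]

theorem algebraMap_real_pos {c : ℝ} (hc : 0 < c) : 0 < algebraMap ℝ R c := by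
  rw [← Real.sq_sqrt hc.le, map_pow]
  exact sq_pos_of_ne_zero ((_root_.map_ne_zero _).2 (Real.sqrt_ne_zero'.2 hc))

variable (R) in
theorem reflectsSigns_real : ReflectsSigns ℝ R := by
  refine fun φ _ _ ↦ ⟨.id ℝ ℝ, fun c _ ↦ ?_⟩
  rw [AlgHom.id_apply, ← Algebra.algebraMap_self_apply c, φ.commutes, Algebra.algebraMap_self_apply]
  rcases lt_trichotomy c 0 with hc | rfl | hc
  · rw [sign_neg hc, sign_neg]
    simpa using algebraMap_real_pos (R := R) (neg_pos.2 hc)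
  · simp
  · rw [sign_pos hc, sign_pos (algebraMap_real_pos hc)]

variable [PolynomialIVT R]

theorem ReflectsSigns.polynomial (h : ReflectsSigns B R) : ReflectsSigns B[X] R := by
  intro φ Q hQ
  set φ₀ : B →ₐ[ℝ] R := φ.comp CAlgHom
  have hφ : ∀ q : B[X], φ q = (q.map (φ₀ : B →+* R)).eval (φ X) := fun q ↦ by
    rw [eval_map, ← coe_eval₂RingHom]
    exact congrArg (fun f : B[X] →+* R ↦ f q)
      (ringHom_ext (f := (φ : B[X] →+* R)) (by simp [φ₀]) (by simp))
  obtain ⟨D, hD, htransfer⟩ :=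
    exists_finite_forall_exists_sign_eval_eq (S := ℝ) (φ₀ : B →+* R) hQ.toFinset
  obtain ⟨χ₀, hχ₀⟩ := h φ₀ D hD
  obtain ⟨y, hy⟩ := htransfer (χ₀ : B →+* ℝ) hχ₀ (φ X)
  refine ⟨(aeval y).comp (mapAlgHom χ₀), fun q hq ↦ ?_⟩
  rw [hφ, hy q (hQ.mem_toFinset.2 hq)]
  rfl

variable (R) in
theorem reflectsSigns_mvPolynomial (n : ℕ) : ReflectsSigns (MvPolynomial (Fin n) ℝ) R := by
  induction n with
  | zero =>
    let e := (MvPolynomial.isEmptyAlgEquiv ℝ (Fin 0)).symm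
    exact (reflectsSigns_real R).of_surjective e.toAlgHom e.surjective
  | succ n ih =>
    let e := (MvPolynomial.finSuccEquiv ℝ n).symm
    exact ih.polynomial.of_surjective e.toAlgHom e.surjective

variable (A R) in
theorem artinLang [Algebra.FiniteType ℝ A] : ReflectsSigns A R := by
  obtain ⟨n, f, hf⟩ := Algebra.FiniteType.iff_quotient_mvPolynomial''.1 ‹Algebra.FiniteType ℝ A›
  exact (reflectsSigns_mvPolynomial R n).of_surjective f hf

end ArtinLang

/-! ### Real closed subfields of an algebraically closed field -/

section SumsOfSquares

variable (E : Type*) [Field E] [LinearOrder E] [IsStrictOrderedRing E]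

/-- Sums of squares of polynomials with nonnegative weights `c`. -/
noncomputable def sumsOfSquares : Subsemiring E[X] :=
  Submonoid.subsemiringClosure
    { carrier := {s | ∃ (c : E) (g : E[X]), 0 ≤ c ∧ s = C c * g ^ 2}
      one_mem' := ⟨1, 1, zero_le_one, by simp⟩
      mul_mem' := by
        rintro _ _ ⟨c, g, hc, rfl⟩ ⟨c', g', hc', rfl⟩
        exact ⟨c * c', g * g', mul_nonneg hc hc', by rw [C_mul]; ring⟩ }

namespace sumsOfSquares

variable {E} {s : E[X]}

theorem C_mul_sq_mem {c : E} (hc : 0 ≤ c) (g : E[X]) : C c * g ^ 2 ∈ sumsOfSquares E :=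
  AddSubmonoid.subset_closure ⟨c, g, hc, rfl⟩

theorem C_mem {c : E} (hc : 0 ≤ c) : C c ∈ sumsOfSquares E := by
  simpa using C_mul_sq_mem hc 1

theorem sq_mem (g : E[X]) : g ^ 2 ∈ sumsOfSquares E := by
  simpa using C_mul_sq_mem zero_le_one g

theorem eval_nonneg (hs : s ∈ sumsOfSquares E) (a : E) : 0 ≤ s.eval a := by
  induction hs using AddSubmonoid.closure_induction with
  | mem s hs =>
    obtain ⟨c, g, hc, rfl⟩ := hs
    simpa using mul_nonneg hc (sq_nonneg (g.eval a))
  | zero => simp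
  | add s t _ _ hs ht => simpa using add_nonneg hs ht

theorem exists_dvd_sub_natDegree_lt (hs : s ∈ sumsOfSquares E) {p : E[X]} (hp : p.natDegree ≠ 0) :
    ∃ r ∈ sumsOfSquares E, p ∣ s - r ∧ r.natDegree < 2 * p.natDegree - 1 := by
  induction hs using AddSubmonoid.closure_induction with
  | mem s hs =>
    obtain ⟨c, g, hc, rfl⟩ := hs
    have hdvd : p ∣ g - g % p := ⟨g / p, by linear_combination -EuclideanDomain.div_add_mod g p⟩
    refine ⟨C c * (g % p) ^ 2, C_mul_sq_mem hc _, ?_, ?_⟩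
    · rw [← mul_sub]
      exact (hdvd.trans (sub_dvd_pow_sub_pow g (g % p) 2)).mul_left (C c)
    · have hlt := natDegree_mod_lt g hp
      exact ((natDegree_C_mul_le _ _).trans natDegree_pow_le).trans_lt (by lia)
  | zero => exact ⟨0, zero_mem _, by simp, by simp; lia⟩
  | add s t _ _ hs ht =>
    obtain ⟨r, hr, hdvd, hlt⟩ := hs
    obtain ⟨r', hr', hdvd', hlt'⟩ := ht
    exact ⟨r + r', add_mem hr hr', add_sub_add_comm s t r r' ▸ dvd_add hdvd hdvd',
      (natDegree_add_le r r').trans_lt (max_lt hlt hlt')⟩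

end sumsOfSquares

variable {E} {a b : E}

theorem exists_irreducible_dvd_eval_mul_eval_neg {f : E[X]} (hf : f.eval a * f.eval b < 0) :
    ∃ q, Irreducible q ∧ q ∣ f ∧ q.eval a * q.eval b < 0 := by
  induction f using WfDvdMonoid.induction_on_irreducible with
  | zero => simp at hf
  | unit u hu =>
    obtain ⟨c, -, rfl⟩ := Polynomial.isUnit_iff.1 hu
    exact absurd (by simpa using hf) (mul_self_nonneg c).not_gt
  | mul g q _ hq ih =>
    rcases lt_or_ge (q.eval a * q.eval b) 0 with hneg | hnonneg
    · exact ⟨q, hq, dvd_mul_right q g, hneg⟩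
    · have hprod : (q.eval a * q.eval b) * (g.eval a * g.eval b) < 0 := by
        rwa [mul_mul_mul_comm, ← eval_mul, ← eval_mul]
      obtain ⟨r, hr, hdvd, hneg⟩ := ih (neg_of_mul_neg_right hprod hnonneg)
      exact ⟨r, hr, hdvd.mul_left q, hneg⟩

theorem exists_irreducible_natDegree_lt_dvd_one_add {p s : E[X]} (hp : Irreducible p)
    (hneg : p.eval a * p.eval b < 0) (hs : s ∈ sumsOfSquares E) (hdvd : p ∣ 1 + s) :
    ∃ q, Irreducible q ∧ q.eval a * q.eval b < 0 ∧ q.natDegree < p.natDegree ∧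
      ∃ r ∈ sumsOfSquares E, q ∣ 1 + r := by
  obtain ⟨r, hr, hdvd', hlt⟩ := sumsOfSquares.exists_dvd_sub_natDegree_lt hs hp.natDegree_pos.ne'
  obtain ⟨h, heq⟩ : p ∣ 1 + r := by
    convert dvd_sub hdvd hdvd' using 1
    ring
  have hpos (x : E) : 0 < p.eval x * h.eval x := by
    rw [← eval_mul, ← heq, eval_add, eval_one]
    linarith [sumsOfSquares.eval_nonneg hr x]
  have hprod : 0 < (p.eval a * p.eval b) * (h.eval a * h.eval b) := by
    rw [mul_mul_mul_comm]
    exact mul_pos (hpos a) (hpos b)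
  obtain ⟨q, hq, hqh, hqneg⟩ :=
    exists_irreducible_dvd_eval_mul_eval_neg (neg_of_mul_pos_right hprod hneg.le)
  refine ⟨q, hq, hqneg, ?_, r, hr, heq ▸ hqh.mul_left p⟩
  have hh : h ≠ 0 := by
    rintro rfl
    simpa using hpos a
  have hdeg : p.natDegree + h.natDegree = (1 + r).natDegree := by
    rw [heq, natDegree_mul hp.ne_zero hh]
  have hdeg' : (1 + r).natDegree ≤ r.natDegree := by
    simpa using natDegree_add_le 1 r
  have := natDegree_le_of_dvd hqh hh
  lia

theorem not_dvd_one_add_of_mem_sumsOfSquares {p s : E[X]} (hp : Irreducible p)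
    (hneg : p.eval a * p.eval b < 0) (hs : s ∈ sumsOfSquares E) : ¬ p ∣ 1 + s := by
  induction hn : p.natDegree using Nat.strong_induction_on generalizing p s with
  | _ n ih =>
    intro hdvd
    obtain ⟨q, hq, hqneg, hlt, r, hr, hqr⟩ :=
      exists_irreducible_natDegree_lt_dvd_one_add hp hneg hs hdvd
    exact ih _ (hn ▸ hlt) hq hqneg hr rfl hqr

theorem mem_Ioo_of_irreducible_of_eval_eq_zero {q : E[X]} (hq : Irreducible q) {r : E}
    (hr : q.eval r = 0) (hab : a < b) (hneg : q.eval a * q.eval b < 0) : r ∈ Ioo a b := by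
  obtain ⟨u, hu⟩ : Associated (X - C r) q :=
    (irreducible_X_sub_C r).associated_of_dvd hq (dvd_iff_isRoot.2 hr)
  obtain ⟨c, -, hc⟩ := Polynomial.isUnit_iff.1 u.isUnit
  have hprod : (a - r) * (b - r) * (c * c) < 0 := by
    have : q.eval a * q.eval b = (a - r) * (b - r) * (c * c) := by
      simp only [← hu, ← hc, eval_mul, eval_sub, eval_X, eval_C]
      ring
    rwa [← this]
  rcases mul_neg_iff.1 (neg_of_mul_neg_left hprod (mul_self_nonneg c)) with ⟨ha, hb⟩ | ⟨ha, hb⟩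
  · exact absurd hab (by linarith)
  · exact ⟨sub_neg.1 ha, sub_pos.1 hb⟩

end SumsOfSquares

section Cone

variable {K : Type*} [Field K]

/-- A cone in a field `K`, which may be algebraically closed: only differences of elements of the
cone, not arbitrary elements of `K`, are required to have their squares in it. -/
structure IsCone (P : Subsemiring K) : Prop where
  sub_sq_mem {a b : K} (ha : a ∈ P) (hb : b ∈ P) : (a - b) ^ 2 ∈ P
  eq_zero_of_neg_mem {a : K} (ha : a ∈ P) (hna : -a ∈ P) : a = 0

theorem exists_mem_of_mem_sSup {c : Set (Subsemiring K)} (hchain : IsChain (· ≤ ·) c)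
    (hne : c.Nonempty) {a b : K} (ha : a ∈ sSup c) (hb : b ∈ sSup c) : ∃ P ∈ c, a ∈ P ∧ b ∈ P := by
  obtain ⟨P, hP, ha⟩ := (Subsemiring.mem_sSup_of_directedOn hne hchain.directedOn).1 ha
  obtain ⟨Q, hQ, hb⟩ := (Subsemiring.mem_sSup_of_directedOn hne hchain.directedOn).1 hb
  rcases hchain.total hP hQ with hle | hle
  · exact ⟨Q, hQ, hle ha, hb⟩
  · exact ⟨P, hP, ha, hle hb⟩

theorem IsCone.exists_maximal {P : Subsemiring K} (hP : IsCone P) :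
    ∃ Q, P ≤ Q ∧ Maximal IsCone Q := by
  refine zorn_le_nonempty₀ {Q | IsCone Q} (fun c hc hchain Q hQ ↦ ?_) P hP
  refine ⟨sSup c, ⟨fun ha hb ↦ ?_, fun ha hna ↦ ?_⟩, fun _ ↦ le_sSup⟩
  · obtain ⟨Q, hQ, ha, hb⟩ := exists_mem_of_mem_sSup hchain ⟨Q, hQ⟩ ha hb
    exact le_sSup hQ ((hc hQ).sub_sq_mem ha hb)
  · obtain ⟨Q, hQ, ha, hna⟩ := exists_mem_of_mem_sSup hchain ⟨Q, hQ⟩ ha hna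
    exact (hc hQ).eq_zero_of_neg_mem ha hna

/-- The subring of differences of elements of a subsemiring. -/
def differences (P : Subsemiring K) : Subring K where
  carrier := {x | ∃ p ∈ P, ∃ q ∈ P, x = p - q}
  zero_mem' := ⟨0, zero_mem P, 0, zero_mem P, by simp⟩
  one_mem' := ⟨1, one_mem P, 0, zero_mem P, by simp⟩
  add_mem' := by
    rintro _ _ ⟨p, hp, q, hq, rfl⟩ ⟨p', hp', q', hq', rfl⟩
    exact ⟨p + p', add_mem hp hp', q + q', add_mem hq hq', by ring⟩
  mul_mem' := by
    rintro _ _ ⟨p, hp, q, hq, rfl⟩ ⟨p', hp', q', hq', rfl⟩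
    exact ⟨p * p' + q * q', add_mem (mul_mem hp hp') (mul_mem hq hq'), p * q' + q * p',
      add_mem (mul_mem hp hq') (mul_mem hq hp'), by ring⟩
  neg_mem' := by
    rintro _ ⟨p, hp, q, hq, rfl⟩
    exact ⟨q, hq, p, hp, by ring⟩

variable {P : Subsemiring K}

theorem mem_differences_of_mem {x : K} (hx : x ∈ P) : x ∈ differences P :=
  ⟨x, hx, 0, zero_mem P, by simp⟩

theorem IsCone.sq_mem (hP : IsCone P) {x : K} (hx : x ∈ differences P) : x ^ 2 ∈ P := by
  obtain ⟨p, hp, q, hq, rfl⟩ := hx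
  exact hP.sub_sq_mem hp hq

/-- The cone of quotients of elements of `P` by nonzero squares of differences. -/
def IsCone.divSq (hP : IsCone P) : Subsemiring K where
  carrier := {x | ∃ s ∈ differences P, s ≠ 0 ∧ x * s ^ 2 ∈ P}
  zero_mem' := ⟨1, one_mem _, one_ne_zero, by simp⟩
  one_mem' := ⟨1, one_mem _, one_ne_zero, by simp⟩
  add_mem' := by
    rintro x y ⟨s, hs, hs0, hx⟩ ⟨t, ht, ht0, hy⟩
    refine ⟨s * t, mul_mem hs ht, mul_ne_zero hs0 ht0, ?_⟩
    convert add_mem (mul_mem hx (hP.sq_mem ht)) (mul_mem hy (hP.sq_mem hs)) using 1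
    ring
  mul_mem' := by
    rintro x y ⟨s, hs, hs0, hx⟩ ⟨t, ht, ht0, hy⟩
    refine ⟨s * t, mul_mem hs ht, mul_ne_zero hs0 ht0, ?_⟩
    convert mul_mem hx hy using 1
    ring

theorem IsCone.isCone_divSq (hP : IsCone P) : IsCone hP.divSq where
  sub_sq_mem := by
    rintro x y ⟨s, hs, hs0, hx⟩ ⟨t, ht, ht0, hy⟩
    refine ⟨(s * t) ^ 2, pow_mem (mul_mem hs ht) 2, pow_ne_zero 2 (mul_ne_zero hs0 ht0), ?_⟩
    convert hP.sub_sq_mem (mul_mem hx (hP.sq_mem ht)) (mul_mem hy (hP.sq_mem hs)) using 1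
    ring
  eq_zero_of_neg_mem := by
    rintro x ⟨s, hs, hs0, hx⟩ ⟨t, ht, ht0, hnx⟩
    have hzero : x * s ^ 2 * t ^ 2 = 0 := by
      refine hP.eq_zero_of_neg_mem (mul_mem hx (hP.sq_mem ht)) ?_
      convert mul_mem hnx (hP.sq_mem hs) using 1
      ring
    simpa [hs0, ht0] using hzero

/-- The cone generated by `P` and `-a`. -/
def IsCone.adjoinNeg (hP : IsCone P) {a : K} (ha : a ∈ differences P) : Subsemiring K where
  carrier := {x | ∃ p ∈ P, ∃ q ∈ P, x = p - a * q}
  zero_mem' := ⟨0, zero_mem P, 0, zero_mem P, by simp⟩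
  one_mem' := ⟨1, one_mem P, 0, zero_mem P, by simp⟩
  add_mem' := by
    rintro _ _ ⟨p, hp, q, hq, rfl⟩ ⟨p', hp', q', hq', rfl⟩
    exact ⟨p + p', add_mem hp hp', q + q', add_mem hq hq', by ring⟩
  mul_mem' := by
    rintro _ _ ⟨p, hp, q, hq, rfl⟩ ⟨p', hp', q', hq', rfl⟩
    exact ⟨p * p' + a ^ 2 * (q * q'),
      add_mem (mul_mem hp hp') (mul_mem (hP.sq_mem ha) (mul_mem hq hq')), p * q' + q * p',
      add_mem (mul_mem hp hq') (mul_mem hq hp'), by ring⟩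

theorem IsCone.mem_differences_of_mem_adjoinNeg (hP : IsCone P) {a : K} (ha : a ∈ differences P)
    {x : K} (hx : x ∈ hP.adjoinNeg ha) : x ∈ differences P := by
  obtain ⟨p, hp, q, hq, rfl⟩ := hx
  exact sub_mem (mem_differences_of_mem hp) (mul_mem ha (mem_differences_of_mem hq))

theorem IsCone.le_adjoinNeg (hP : IsCone P) {a : K} (ha : a ∈ differences P) :
    P ≤ hP.adjoinNeg ha :=
  fun x hx ↦ ⟨x, hx, 0, zero_mem P, by simp⟩

theorem div_sq_mem_of_maximal (hP : Maximal IsCone P) {p s : K} (hp : p ∈ P)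
    (hs : s ∈ differences P) (hs0 : s ≠ 0) : p / s ^ 2 ∈ P :=
  hP.le_of_ge hP.prop.isCone_divSq (fun x hx ↦ ⟨1, one_mem _, one_ne_zero, by simpa using hx⟩)
    ⟨s, hs, hs0, by rwa [div_mul_cancel₀ _ (pow_ne_zero 2 hs0)]⟩

theorem isCone_adjoinNeg_of_notMem (hP : Maximal IsCone P) {a : K} (ha : a ∈ differences P)
    (haP : a ∉ P) : IsCone (hP.prop.adjoinNeg ha) where
  sub_sq_mem hx hy := hP.prop.le_adjoinNeg ha <| hP.prop.sq_mem <|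
    sub_mem (hP.prop.mem_differences_of_mem_adjoinNeg ha hx)
      (hP.prop.mem_differences_of_mem_adjoinNeg ha hy)
  eq_zero_of_neg_mem := by
    rintro _ ⟨p, hp, q, hq, rfl⟩ ⟨p', hp', q', hq', heq⟩
    have hsum : p + p' = a * (q + q') := by linear_combination -heq
    have hq0 : q + q' = 0 := by
      by_contra hne
      refine haP ?_
      convert div_sq_mem_of_maximal hP (mul_mem (add_mem hp hp') (add_mem hq hq'))
        (mem_differences_of_mem (add_mem hq hq')) hne using 1
      rw [hsum]
      field_simp
    have hp0 : p + p' = 0 := by rw [hsum, hq0, mul_zero]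
    rw [hP.prop.eq_zero_of_neg_mem hq (eq_neg_of_add_eq_zero_right hq0 ▸ hq'),
      hP.prop.eq_zero_of_neg_mem hp (eq_neg_of_add_eq_zero_right hp0 ▸ hp'), mul_zero, sub_zero]

theorem mem_or_neg_mem_of_maximal (hP : Maximal IsCone P) {a : K} (ha : a ∈ differences P) :
    a ∈ P ∨ -a ∈ P := by
  refine or_iff_not_imp_left.2 fun haP ↦ ?_
  exact hP.le_of_ge (isCone_adjoinNeg_of_notMem hP ha haP) (hP.prop.le_adjoinNeg ha)
    ⟨0, zero_mem P, 1, one_mem P, by simp⟩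

/-- The subfield of differences of elements of a maximal cone. -/
def differenceField (hP : Maximal IsCone P) : Subfield K where
  toSubring := differences P
  inv_mem' x hx := by
    rcases eq_or_ne x 0 with rfl | hx0
    · simp
    obtain ⟨p, hp, q, hq, heq⟩ := id hx
    refine ⟨_, div_sq_mem_of_maximal hP hp hx hx0, _, div_sq_mem_of_maximal hP hq hx hx0, ?_⟩
    rw [← sub_div, ← heq]
    field_simp

/-- The maximal cone `P` as the cone of nonnegative elements of its field of differences. -/
def differenceCone (hP : Maximal IsCone P) : RingCone (differenceField hP) where
  toSubsemiring := P.comap (differenceField hP).subtype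
  eq_zero_of_mem_of_neg_mem' ha hna := Subtype.ext (hP.prop.eq_zero_of_neg_mem ha hna)

end Cone

section RootAdjunction

variable {E K : Type*} [Field E] [Field K] [Algebra E K] {q : E[X]} {α : K}

theorem exists_aeval_mul_aeval_eq_one (hq : Irreducible q) (hα : aeval α q = 0) {f : E[X]}
    (hf : aeval α f ≠ 0) : ∃ g : E[X], aeval α g * aeval α f = 1 := by
  have hdvd : ¬ q ∣ f := by
    rintro ⟨u, rfl⟩
    exact hf (by rw [map_mul, hα, zero_mul])
  obtain ⟨u, g, hg⟩ := hq.coprime_iff_not_dvd.2 hdvd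
  exact ⟨g, by simpa [hα] using congrArg (aeval α) hg⟩

variable [LinearOrder E] [IsStrictOrderedRing E] {a b : E}

/- If `q` changes sign, adjoining a root `α` of `q` does not turn `-1` into a sum of squares. -/
theorem isCone_map_sumsOfSquares (hq : Irreducible q) (hα : aeval α q = 0)
    (hneg : q.eval a * q.eval b < 0) :
    IsCone ((sumsOfSquares E).map (aeval (R := E) α).toRingHom) where
  sub_sq_mem := by
    rintro _ _ ⟨s, -, rfl⟩ ⟨t, -, rfl⟩
    exact ⟨(s - t) ^ 2, sumsOfSquares.sq_mem _, by simp⟩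
  eq_zero_of_neg_mem := by
    rintro _ ⟨s, hs, rfl⟩ ⟨t, ht, hst⟩
    by_contra hne
    obtain ⟨g, hg⟩ := exists_aeval_mul_aeval_eq_one hq hα hne
    have hsum : t * s * g ^ 2 ∈ sumsOfSquares E := mul_mem (mul_mem ht hs) (sumsOfSquares.sq_mem g)
    have hroot : aeval α (1 + t * s * g ^ 2) = 0 := by
      have hst' : aeval α t = -aeval α s := hst
      simp only [map_add, map_one, map_mul, map_pow, hst']
      linear_combination -(1 + aeval α g * aeval α s) * hg
    refine not_dvd_one_add_of_mem_sumsOfSquares hq hneg hsum (by_contra fun hdvd ↦ ?_)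
    obtain ⟨u, v, huv⟩ := hq.coprime_iff_not_dvd.2 hdvd
    simpa [hα, hroot] using congrArg (aeval α) huv

theorem mem_range_algebraMap_of_forall_sumsOfSquares
    (h : ∀ s ∈ sumsOfSquares E, aeval α s ∈ (algebraMap E K).range) :
    α ∈ (algebraMap E K).range := by
  set c : E[X] := C 2⁻¹
  have hc : c ^ 2 * 4 = 1 := by
    rw [← C_pow, ← C_ofNat, ← C_mul, ← C_1]
    norm_num
  have hX : (X : E[X]) = (c * (X + 1)) ^ 2 - (c * (X - 1)) ^ 2 := by
    linear_combination -X * hc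
  have hα : α = aeval α ((c * (X + 1)) ^ 2) - aeval α ((c * (X - 1)) ^ 2) := by
    rw [← map_sub, ← hX, aeval_X]
  exact hα ▸ sub_mem (h _ (sumsOfSquares.sq_mem _)) (h _ (sumsOfSquares.sq_mem _))

theorem polynomialIVT_of_isAlgClosed [IsAlgClosed K]
    (h : ∀ α : K, IsCone ((sumsOfSquares E).map (aeval (R := E) α).toRingHom) →
      ∀ s ∈ sumsOfSquares E, aeval α s ∈ (algebraMap E K).range) : PolynomialIVT E where
  exists_root {p a b} hab hp := by
    obtain ⟨q, hq, ⟨u, rfl⟩, hneg⟩ := exists_irreducible_dvd_eval_mul_eval_neg hp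
    obtain ⟨α, hα⟩ := IsAlgClosed.exists_aeval_eq_zero K q hq.degree_pos.ne'
    obtain ⟨r, rfl⟩ := mem_range_algebraMap_of_forall_sumsOfSquares
      (h α (isCone_map_sumsOfSquares hq hα hneg))
    have hr : q.eval r = 0 := by
      simpa [aeval_algebraMap_apply] using hα
    exact ⟨r, mem_Ioo_of_irreducible_of_eval_eq_zero hq hr hab hneg, by simp [hr]⟩

end RootAdjunction

theorem IsCone.exists_subfield_polynomialIVT {K : Type*} [Field K] [IsAlgClosed K]
    {P₀ : Subsemiring K} (hP₀ : IsCone P₀) :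
    ∃ (E : Subfield K) (_ : LinearOrder E) (_ : IsStrictOrderedRing E), PolynomialIVT E ∧
      ∀ x ∈ P₀, ∃ hx : x ∈ E, 0 ≤ (⟨x, hx⟩ : E) := by
  classical
  obtain ⟨P, hle, hP⟩ := hP₀.exists_maximal
  have : HasMemOrNegMem (differenceCone hP) := ⟨fun x ↦ mem_or_neg_mem_of_maximal hP x.2⟩
  let _ : LinearOrder (differenceField hP) := .mkOfAddGroupCone (differenceCone hP)
  have : IsOrderedRing (differenceField hP) := .mkOfCone (differenceCone hP)
  have : IsStrictOrderedRing (differenceField hP) := IsOrderedRing.toIsStrictOrderedRing _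
  have nonneg_iff (x : differenceField hP) : 0 ≤ x ↔ (x : K) ∈ P := by
    change x - 0 ∈ differenceCone hP ↔ _
    rw [sub_zero]
    rfl
  refine ⟨differenceField hP, inferInstance, inferInstance, ?_, fun x hx ↦ ?_⟩
  · refine polynomialIVT_of_isAlgClosed (K := K) fun α hα s hs ↦ ?_
    have hmem : aeval α s ∈ P := by
      refine hP.le_of_ge hα (fun x hx ↦ ?_) ⟨s, hs, rfl⟩
      let x' : differenceField hP := ⟨x, mem_differences_of_mem hx⟩
      exact ⟨C x', sumsOfSquares.C_mem ((nonneg_iff x').2 hx), aeval_C α x'⟩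
    exact ⟨⟨_, mem_differences_of_mem hmem⟩, rfl⟩
  · exact ⟨mem_differences_of_mem (hle hx), (nonneg_iff _).2 (hle hx)⟩
/-! ### The Positivstellensatz -/

section Orderings

universe u

variable {A : Type u} [CommRing A]

theorem exists_le_isMax_ringPreordering (P₀ : RingPreordering A) :
    ∃ P : RingPreordering A, P₀ ≤ P ∧ IsMax P := by
  refine zorn_le_nonempty_Ici₀ P₀ (fun c _ hc P hP ↦ ?_) P₀ le_rfl
  have hchain : IsChain (· ≤ ·) (RingPreordering.toSubsemiring '' c) :=
    RingPreordering.toSubsemiring_mono.isChain_image hc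
  have hne : (RingPreordering.toSubsemiring '' c).Nonempty := ⟨_, P, hP, rfl⟩
  have hle : ∀ Q ∈ c, Q.toSubsemiring ≤ sSup (RingPreordering.toSubsemiring '' c) :=
    fun Q hQ ↦ le_sSup ⟨Q, hQ, rfl⟩
  refine ⟨⟨sSup (RingPreordering.toSubsemiring '' c), fun hx ↦ hle P hP
    (P.mem_of_isSquare hx), fun hneg ↦ ?_⟩, hle⟩
  obtain ⟨_, ⟨Q, -, rfl⟩, hQ⟩ :=
    (Subsemiring.mem_sSup_of_directedOn hne hchain.directedOn).1 hneg
  exact Q.neg_one_notMem hQ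

theorem exists_eq_neg_one_of_isMax {P : RingPreordering A} (hP : IsMax P) {a : A} (ha : a ∉ P) :
    ∃ p ∈ P, ∃ q ∈ P, -1 = p + a * q := by
  by_contra hneg
  have hle : ∀ x ∈ P, ∃ p ∈ P, ∃ q ∈ P, x = p + a * q :=
    fun x hx ↦ ⟨x, hx, 0, zero_mem P, by simp⟩
  let Q : RingPreordering A := .mk' {x | ∃ p ∈ P, ∃ q ∈ P, x = p + a * q}
    (by
      rintro _ _ ⟨p, hp, q, hq, rfl⟩ ⟨p', hp', q', hq', rfl⟩
      exact ⟨p + p', add_mem hp hp', q + q', add_mem hq hq', by ring⟩)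
    (by
      rintro _ _ ⟨p, hp, q, hq, rfl⟩ ⟨p', hp', q', hq', rfl⟩
      exact ⟨p * p' + a ^ 2 * (q * q'),
        add_mem (mul_mem hp hp') (mul_mem (P.pow_two_mem a) (mul_mem hq hq')),
        p * q' + q * p', add_mem (mul_mem hp hq') (mul_mem hq hp'), by ring⟩)
    (fun x ↦ hle _ (P.mul_self_mem x)) hneg
  have hPQ : P ≤ Q := hle
  exact ha (hP hPQ ⟨0, zero_mem P, 1, one_mem P, by simp⟩)

theorem isOrdering_of_isMax {P : RingPreordering A} (hP : IsMax P) : P.IsOrdering := by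
  refine RingPreordering.isOrdering_iff.2 fun a b hab ↦ ?_
  by_contra! hcon
  obtain ⟨p, hp, q, hq, ha⟩ := exists_eq_neg_one_of_isMax hP hcon.1
  obtain ⟨p', hp', q', hq', hb⟩ := exists_eq_neg_one_of_isMax hP hcon.2
  have key : (-1 : A) = p + p' + p * p' + -(a * b) * (q * q') := by
    linear_combination (1 + p') * ha - (a * q) * hb
  refine P.neg_one_notMem (key ▸ ?_)
  exact add_mem (add_mem (add_mem hp hp') (mul_mem hp hp')) (mul_mem hab (mul_mem hq hq'))

theorem isCone_map_of_ker_eq_support {K : Type*} [Field K] (P : RingPreordering A) [P.IsOrdering]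
    {φ : A →+* K} (hφ : RingHom.ker φ = P.support) : IsCone (P.toSubsemiring.map φ) where
  sub_sq_mem := by
    rintro _ _ ⟨a, -, rfl⟩ ⟨b, -, rfl⟩
    exact ⟨(a - b) ^ 2, P.pow_two_mem _, by simp⟩
  eq_zero_of_neg_mem := by
    rintro _ ⟨a, ha, rfl⟩ ⟨b, hb, hab⟩
    have hsum : a + b ∈ P.support := by
      rw [← hφ, RingHom.mem_ker, map_add, hab, add_neg_cancel]
    have hneg : -a ∈ P := by
      simpa using add_mem (RingPreordering.mem_support.1 hsum).2 hb
    exact RingHom.mem_ker.1 (hφ ▸ RingPreordering.mem_support.2 ⟨ha, hneg⟩)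

theorem exists_ringHom_polynomialIVT (P : RingPreordering A) [P.IsOrdering] :
    ∃ (E : Type u) (_ : Field E) (_ : LinearOrder E) (_ : IsStrictOrderedRing E) (ψ : A →+* E),
      PolynomialIVT E ∧ ∀ a ∈ P, 0 ≤ ψ a := by
  let F := FractionRing (A ⧸ P.support)
  let φ : A →+* AlgebraicClosure F :=
    ((algebraMap F (AlgebraicClosure F)).comp (algebraMap (A ⧸ P.support) F)).comp
      (Ideal.Quotient.mk P.support)
  have hφ : RingHom.ker φ = P.support := by
    rw [← RingHom.comap_ker, (RingHom.injective_iff_ker_eq_bot _).1, ← RingHom.ker_eq_comap_bot,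
      Ideal.mk_ker]
    exact (algebraMap F _).injective.comp (IsFractionRing.injective (A ⧸ P.support) F)
  obtain ⟨E, _, _, hE, hnonneg⟩ :=
    (isCone_map_of_ker_eq_support P hφ).exists_subfield_polynomialIVT
  have hmem : ∀ a, φ a ∈ E := fun a ↦
    (mem_or_neg_mem P a).elim (fun ha ↦ (hnonneg _ ⟨a, ha, rfl⟩).1)
      fun ha ↦ neg_mem_iff.1 (map_neg φ a ▸ (hnonneg _ ⟨-a, ha, rfl⟩).1)
  exact ⟨E, inferInstance, _, inferInstance, φ.codRestrict E hmem, hE,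
    fun a ha ↦ (hnonneg _ ⟨a, ha, rfl⟩).2⟩

end Orderings

section Positivstellensatz

variable {A : Type*} [CommRing A] [Algebra ℝ A] {S : Set A}

theorem mem_KSet_iff {χ : A →ₐ[ℝ] ℝ} : χ ∈ KSet S ↔ ∀ s ∈ S, 0 ≤ χ s := by
  refine ⟨fun h s hs ↦ h s (.gen hs), fun h a ha ↦ ?_⟩
  induction ha with
  | sq a => exact map_pow χ a 2 ▸ sq_nonneg _
  | gen ha => exact h _ ha
  | add _ _ ha hb => exact map_add χ _ _ ▸ add_nonneg ha hb
  | mul _ _ ha hb => exact map_mul χ _ _ ▸ mul_nonneg ha hb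

theorem isInPreordering_neg_one [Algebra.FiniteType ℝ A] (hS : S.Finite) (hK : KSet S = ∅) :
    IsInPreordering S (-1) := by
  by_contra hneg
  let P₀ : RingPreordering A := .mk' {a | IsInPreordering S a} .add .mul
    (fun a ↦ sq a ▸ .sq a) hneg
  obtain ⟨P, hP₀, hP⟩ := exists_le_isMax_ringPreordering P₀
  have := isOrdering_of_isMax hP
  obtain ⟨E, _, _, _, ψ, _, hψ⟩ := exists_ringHom_polynomialIVT P
  let : Algebra ℝ E := (ψ.comp (algebraMap ℝ A)).toAlgebra
  obtain ⟨χ, hχ⟩ := artinLang A E { ψ with commutes' := fun _ ↦ rfl } S hS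
  refine (hK ▸ mem_KSet_iff.2 fun s hs ↦ ?_ : χ ∈ (∅ : Set (A →ₐ[ℝ] ℝ)))
  exact sign_nonneg_iff.1 (hχ s hs ▸ sign_nonneg_iff.2 (hψ s (hP₀ (.gen hs))))

end Positivstellensatz

/-! ### Positive functionals and bounded elements -/

/-- The cone of linear functionals that are nonnegative on `D`. -/
abbrev positiveFunctionals {V : Type*} [AddCommGroup V] [Module ℝ V] (D : Set V) :
    PointedCone ℝ (Module.Dual ℝ V) :=
  PointedCone.dual (Module.Dual.eval ℝ V) D

/-- The preordering generated by `S`, as a set. -/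
def preordering {A : Type*} [CommRing A] (S : Set A) : Set A :=
  {a | IsInPreordering S a}

section LogConvex

variable {a b : ℕ → ℝ} {ρ : ℝ}

theorem apply_one_mul_le_of_logConvex (ha : ∀ n, 0 ≤ a n)
    (hconv : ∀ n, a (n + 1) ^ 2 ≤ a n * a (n + 2)) (n : ℕ) : a 1 * a n ≤ a 0 * a (n + 1) := by
  induction n with
  | zero => exact (mul_comm _ _).le
  | succ n ih =>
    rcases (ha n).eq_or_lt with hn | hn
    · have hsucc : a (n + 1) = 0 := by simpa [← hn, sq_nonpos_iff] using hconv n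
      rw [hsucc, mul_zero]
      exact mul_nonneg (ha _) (ha _)
    · refine le_of_mul_le_mul_left ?_ hn
      nlinarith [mul_le_mul_of_nonneg_right ih (ha (n + 1)),
        mul_le_mul_of_nonneg_left (hconv n) (ha 0)]

theorem pow_mul_le_of_logConvex (ha : ∀ n, 0 ≤ a n)
    (hconv : ∀ n, a (n + 1) ^ 2 ≤ a n * a (n + 2)) (n : ℕ) :
    a 1 ^ n * a 0 ≤ a 0 ^ n * a n := by
  induction n with
  | zero => simp
  | succ n ih =>
    calc a 1 ^ (n + 1) * a 0 = a 1 * (a 1 ^ n * a 0) := by ring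
      _ ≤ a 1 * (a 0 ^ n * a n) := mul_le_mul_of_nonneg_left ih (ha 1)
      _ = a 0 ^ n * (a 1 * a n) := by ring
      _ ≤ a 0 ^ n * (a 0 * a (n + 1)) := by
        gcongr ?_ * ?_
        · exact pow_nonneg (ha 0) n
        · exact apply_one_mul_le_of_logConvex ha hconv n
      _ = a 0 ^ (n + 1) * a (n + 1) := by ring

theorem apply_one_le_of_logConvex_of_le_geometric (ha : ∀ n, 0 ≤ a n)
    (hconv : ∀ n, a (n + 1) ^ 2 ≤ a n * a (n + 2)) (hρ : 0 < ρ) {K : ℝ}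
    (hgeom : ∀ n, a n ≤ K * ρ ^ n) : a 1 ≤ ρ * a 0 := by
  rcases (ha 0).eq_or_lt with h0 | h0
  · have h1 : a 1 = 0 := by simpa [← h0, sq_nonpos_iff] using hconv 0
    rw [h1, ← h0, mul_zero]
  by_contra! hlt
  have hρ0 : 0 < ρ * a 0 := mul_pos hρ h0
  obtain ⟨n, hn⟩ := pow_unbounded_of_one_lt (K / a 0) ((one_lt_div hρ0).2 hlt)
  rw [div_pow, div_lt_div_iff₀ h0 (pow_pos hρ0 n)] at hn
  refine hn.not_ge ?_
  calc a 1 ^ n * a 0 ≤ a 0 ^ n * a n := pow_mul_le_of_logConvex ha hconv n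
    _ ≤ a 0 ^ n * (K * ρ ^ n) := by gcongr; exact hgeom n
    _ = K * (ρ * a 0) ^ n := by ring

theorem le_geometric_of_add_succ_le (ha : ∀ n, 0 ≤ a n) (hb : ∀ n, 0 ≤ b n) (hρ : 0 ≤ ρ)
    (hab : ∀ n, a n + b (n + 1) ≤ ρ * b n) (n : ℕ) : a n ≤ ρ * b 0 * ρ ^ n := by
  have hbn : b n ≤ ρ ^ n * b 0 := by
    induction n with
    | zero => simp
    | succ n ih =>
      calc b (n + 1) ≤ ρ * b n := by linarith [hab n, ha n]
        _ ≤ ρ * (ρ ^ n * b 0) := by gcongr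
        _ = ρ ^ (n + 1) * b 0 := by ring
  calc a n ≤ ρ * b n := by linarith [hab n, hb (n + 1)]
    _ ≤ ρ * (ρ ^ n * b 0) := by gcongr
    _ = ρ * b 0 * ρ ^ n := by ring

end LogConvex

section Insert

variable {A : Type*} [CommRing A] {S : Set A}

theorem isInPreordering_zero : IsInPreordering S 0 := by
  simpa using IsInPreordering.sq (S := S) 0

theorem isInPreordering_one : IsInPreordering S 1 := by
  simpa using IsInPreordering.sq (S := S) 1

theorem exists_eq_sub_mul_of_isInPreordering_insert_neg {f x : A}
    (hx : IsInPreordering (insert (-f) S) x) :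
    ∃ p q, IsInPreordering S p ∧ IsInPreordering S q ∧ x = p - f * q := by
  induction hx with
  | sq a => exact ⟨a ^ 2, 0, .sq a, isInPreordering_zero, by ring⟩
  | gen ha =>
    rcases ha with rfl | ha
    · exact ⟨0, 1, isInPreordering_zero, isInPreordering_one, by ring⟩
    · exact ⟨_, 0, .gen ha, isInPreordering_zero, by ring⟩
  | add _ _ ihx ihy =>
    obtain ⟨p, q, hp, hq, rfl⟩ := ihx
    obtain ⟨p', q', hp', hq', rfl⟩ := ihy
    exact ⟨p + p', q + q', hp.add hp', hq.add hq', by ring⟩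
  | mul _ _ ihx ihy =>
    obtain ⟨p, q, hp, hq, rfl⟩ := ihx
    obtain ⟨p', q', hp', hq', rfl⟩ := ihy
    exact ⟨p * p' + f ^ 2 * (q * q'), p * q' + q * p',
      (hp.mul hp').add ((IsInPreordering.sq f).mul (hq.mul hq')),
      (hp.mul hq').add (hq.mul hp'), by ring⟩

end Insert

section Bounded

variable {A : Type*} [CommRing A] [Algebra ℝ A]

theorem eq_smul_sq_add_one_sub_sq_sub_one (a : A) :
    a = (1 / 4 : ℝ) • ((a + 1) ^ 2 - (a - 1) ^ 2) := by
  have h4 : (a + 1) ^ 2 - (a - 1) ^ 2 = (4 : ℝ) • a := by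
    rw [Algebra.smul_def, map_ofNat]
    ring
  rw [h4, smul_smul]
  norm_num

theorem sq_apply_mul_le {L : Module.Dual ℝ A} (hL : ∀ a, 0 ≤ L (a ^ 2)) (a b : A) :
    L (a * b) ^ 2 ≤ L (a ^ 2) * L (b ^ 2) := by
  have hquad (x : ℝ) : 0 ≤ L (a ^ 2) * (x * x) + 2 * L (a * b) * x + L (b ^ 2) := by
    have hexp : (x • a + b) ^ 2 = (x * x) • a ^ 2 + (2 * x) • (a * b) + b ^ 2 := by
      simp only [Algebra.smul_def, map_mul, map_ofNat]
      ring
    have hsq := hL (x • a + b)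
    rw [hexp, map_add, map_add, map_smul, map_smul, smul_eq_mul, smul_eq_mul] at hsq
    linarith
  have hdiscrim := discrim_le_zero hquad
  rw [discrim] at hdiscrim
  linarith

variable {S : Set A} {L : Module.Dual ℝ A}

theorem apply_sq_nonneg (hL : L ∈ positiveFunctionals (preordering S)) (a : A) : 0 ≤ L (a ^ 2) :=
  hL (.sq a)

theorem comp_mulLeft_mem_positiveFunctionals (hL : L ∈ positiveFunctionals (preordering S))
    {t : A} (ht : IsInPreordering S t) :
    L ∘ₗ LinearMap.mulLeft ℝ t ∈ positiveFunctionals (preordering S) :=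
  fun _ ha ↦ hL (ht.mul ha)

/- The moments `L (h ^ (2 * n))` are log-convex by Cauchy–Schwarz, and the identity forces them to
grow at most like `c ^ n`; so already the first ratio is at most `c`. -/
theorem apply_sq_le_of_sub_sq_mul_eq_one_add (hL : L ∈ positiveFunctionals (preordering S))
    {c : ℝ} (hc : 0 < c) {p q h : A} (hp : IsInPreordering S p) (hq : IsInPreordering S q)
    (hpq : (algebraMap ℝ A c - h ^ 2) * p = 1 + q) : L (h ^ 2) ≤ c * L 1 := by
  have heven (n : ℕ) : IsInPreordering S (h ^ (2 * n)) := pow_mul' h 2 n ▸ .sq _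
  have hconv (n : ℕ) : L (h ^ (2 * (n + 1))) ^ 2 ≤ L (h ^ (2 * n)) * L (h ^ (2 * (n + 2))) := by
    convert sq_apply_mul_le (apply_sq_nonneg hL) (h ^ n) (h ^ (n + 2)) using 3 <;> ring_nf
  have hrec (n : ℕ) :
      L (h ^ (2 * n)) + L (h ^ (2 * (n + 1)) * p) ≤ c * L (h ^ (2 * n) * p) := by
    have hsplit : c • (h ^ (2 * n) * p) =
        h ^ (2 * n) + h ^ (2 * n) * q + h ^ (2 * (n + 1)) * p := by
      rw [Algebra.smul_def]
      linear_combination h ^ (2 * n) * hpq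
    have hq0 : 0 ≤ L (h ^ (2 * n) * q) := hL ((heven n).mul hq)
    have hL' := congrArg L hsplit
    rw [map_add, map_add, map_smul, smul_eq_mul] at hL'
    linarith
  simpa using apply_one_le_of_logConvex_of_le_geometric (fun n ↦ hL (heven n)) hconv hc
    (le_geometric_of_add_succ_le (fun n ↦ hL (heven n)) (fun n ↦ hL ((heven n).mul hp)) hc.le hrec)

theorem exists_sub_sq_mul_eq_one_add [Algebra.FiniteType ℝ A] (hS : S.Finite) {h : A} {C c : ℝ}
    (hbd : ∀ χ ∈ KSet S, |χ h| ≤ C) (hc : C ^ 2 < c) :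
    ∃ p q, IsInPreordering S p ∧ IsInPreordering S q ∧
      (algebraMap ℝ A c - h ^ 2) * p = 1 + q := by
  have hempty : KSet (insert (-(algebraMap ℝ A c - h ^ 2)) S) = ∅ := by
    refine Set.eq_empty_of_forall_notMem fun χ hχ ↦ ?_
    rw [mem_KSet_iff, Set.forall_mem_insert, ← mem_KSet_iff] at hχ
    have hsq : χ h ^ 2 ≤ C ^ 2 := sq_le_sq' (abs_le.1 (hbd χ hχ.2)).1 (abs_le.1 (hbd χ hχ.2)).2
    have hge : c ≤ χ h ^ 2 := by simpa using hχ.1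
    exact (hsq.trans_lt hc).not_ge hge
  obtain ⟨q, p, hq, hp, hpq⟩ := exists_eq_sub_mul_of_isInPreordering_insert_neg
    (isInPreordering_neg_one (hS.insert _) hempty)
  exact ⟨p, q, hp, hq, by linear_combination hpq⟩

theorem exists_abs_apply_le_mul_apply_one [Algebra.FiniteType ℝ A] (hS : S.Finite) {h : A} {C : ℝ}
    (hbd : ∀ χ ∈ KSet S, |χ h| ≤ C) :
    ∃ c > (0 : ℝ), ∀ L ∈ positiveFunctionals (preordering S), |L h| ≤ c * L 1 := by
  let c := |C| + 1
  have hc : 0 < c := by positivity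
  have hCc : C ^ 2 < c ^ 2 := sq_lt_sq.2 (lt_abs.2 (.inl (lt_add_one _)))
  obtain ⟨p, q, hp, hq, hpq⟩ := exists_sub_sq_mul_eq_one_add hS hbd hCc
  refine ⟨c, hc, fun L hL ↦ abs_le_of_sq_le_sq ?_ (mul_nonneg hc.le (hL isInPreordering_one))⟩
  calc L h ^ 2 ≤ L 1 * L (h ^ 2) := by simpa using sq_apply_mul_le (apply_sq_nonneg hL) 1 h
    _ ≤ L 1 * (c ^ 2 * L 1) :=
      mul_le_mul_of_nonneg_left
        (apply_sq_le_of_sub_sq_mul_eq_one_add hL (pow_pos hc 2) hp hq hpq) (hL isInPreordering_one)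
    _ = (c * L 1) ^ 2 := by ring

theorem exists_smul_add_sub_comp_mulLeft_mem [Algebra.FiniteType ℝ A] (hS : S.Finite) {h : A}
    {C : ℝ} (hbd : ∀ χ ∈ KSet S, |χ h| ≤ C) :
    ∃ c > (0 : ℝ), ∀ L ∈ positiveFunctionals (preordering S),
      c • L + L ∘ₗ LinearMap.mulLeft ℝ h ∈ positiveFunctionals (preordering S) ∧
      c • L - L ∘ₗ LinearMap.mulLeft ℝ h ∈ positiveFunctionals (preordering S) := by
  obtain ⟨c, hc, hbound⟩ := exists_abs_apply_le_mul_apply_one hS hbd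
  have hle {L : Module.Dual ℝ A} (hL : L ∈ positiveFunctionals (preordering S)) {t : A}
      (ht : IsInPreordering S t) : |L (h * t)| ≤ c * L t := by
    simpa [mul_comm t] using hbound _ (comp_mulLeft_mem_positiveFunctionals hL ht)
  refine ⟨c, hc, fun L hL ↦ ⟨fun t ht ↦ ?_, fun t ht ↦ ?_⟩⟩
  · exact neg_le_iff_add_nonneg.1 (abs_le.1 (hle hL ht)).1 |>.trans_eq (add_comm _ _)
  · exact sub_nonneg.2 (abs_le.1 (hle hL ht)).2

end Bounded

/-! ### Extremal functionals -/

open scoped ENNReal NNReal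

section Extremal

variable {W : Type*} [AddCommGroup W] [Module ℝ W]

/-- `x` lies on an extremal ray of the cone `C`: every splitting of `x` into two elements of `C`
is proportional. -/
def IsExtremal (C : PointedCone ℝ W) (x : W) : Prop :=
  x ∈ C ∧ ∀ y ∈ C, x - y ∈ C → ∃ r : ℝ, y = r • x

theorem IsExtremal.exists_eq_smul {C : PointedCone ℝ W} {x y : W} (hx : IsExtremal C x) {c : ℝ}
    (hc : 0 < c) (hadd : c • x + y ∈ C) (hsub : c • x - y ∈ C) : ∃ r : ℝ, y = r • x := by
  have hc' : 0 ≤ (2 * c)⁻¹ := by positivity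
  have hx' : x = (2 * c)⁻¹ • (c • x + y) + (2 * c)⁻¹ • (c • x - y) := by
    rw [← smul_add, add_add_sub_cancel, ← two_smul ℝ, ← mul_smul 2 c,
      inv_smul_smul₀ (by positivity)]
  obtain ⟨r, hr⟩ := hx.2 _ (C.smul_mem hc' hadd) (by
    nth_rw 1 [hx', add_sub_cancel_left]
    exact C.smul_mem hc' hsub)
  refine ⟨2 * c * r - c, ?_⟩
  rw [sub_smul, mul_smul, ← hr, smul_inv_smul₀ (by positivity), add_sub_cancel_left]

theorem IsExtremal.of_map {W' : Type*} [AddCommGroup W'] [Module ℝ W'] {f : W →ₗ[ℝ] W'}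
    (hf : Function.Injective f) {C : PointedCone ℝ W} {x : W}
    (hx : IsExtremal (C.map f) (f x)) : IsExtremal C x := by
  refine ⟨?_, fun y hy hxy ↦ ?_⟩
  · obtain ⟨z, hz, hzx⟩ := hx.1
    exact hf hzx ▸ hz
  · obtain ⟨r, hr⟩ := hx.2 (f y) ⟨y, hy, rfl⟩ ⟨x - y, hxy, map_sub f x y⟩
    exact ⟨r, hf (hr.trans (map_smul f r x).symm)⟩

/-- `ν` restricts to an additive, positively homogeneous and definite function on the cone `C`, so
that `{x ∈ C | ν x ≤ 1}` is a cap of `C` in the sense of Choquet. -/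
structure IsCapGauge (C : PointedCone ℝ W) (ν : W → ℝ≥0∞) : Prop where
  map_add : ∀ x ∈ C, ∀ y ∈ C, ν (x + y) = ν x + ν y
  map_smul : ∀ r : ℝ, 0 < r → ∀ x ∈ C, ν (r • x) = ENNReal.ofReal r * ν x
  eq_zero : ∀ x ∈ C, ν x = 0 → x = 0

variable {C : PointedCone ℝ W} {ν : W → ℝ≥0∞}

theorem IsCapGauge.inv_smul_mem (hν : IsCapGauge C ν) {x : W} (hx : x ∈ C) {r : ℝ} (hr : 0 < r)
    (hνr : ν x ≤ ENNReal.ofReal r) : r⁻¹ • x ∈ {y ∈ C | ν y ≤ 1} := by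
  refine ⟨C.smul_mem (inv_nonneg.2 hr.le) hx, ?_⟩
  rw [hν.map_smul _ (inv_pos.2 hr) x hx, ENNReal.ofReal_inv_of_pos hr]
  exact (ENNReal.inv_mul_le_iff (ENNReal.ofReal_pos.2 hr).ne' ENNReal.ofReal_ne_top).2
    (hνr.trans_eq (mul_one _).symm)

theorem IsCapGauge.isExtremal_of_mem_extremePoints (hν : IsCapGauge C ν) {x : W}
    (hx : x ∈ {y ∈ C | ν y ≤ 1}.extremePoints ℝ) : IsExtremal C x := by
  obtain ⟨⟨hxC, hx1⟩, hext⟩ := mem_extremePoints_iff_left.1 hx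
  refine ⟨hxC, fun y hy hz ↦ ?_⟩
  have hsum : ν y + ν (x - y) ≤ 1 := by rwa [← hν.map_add y hy _ hz, add_sub_cancel]
  rcases eq_or_ne (ν y) 0 with hy0 | hy0
  · exact ⟨0, by rw [hν.eq_zero y hy hy0, zero_smul]⟩
  rcases eq_or_ne (ν (x - y)) 0 with hz0 | hz0
  · exact ⟨1, by rw [one_smul, ← sub_eq_zero.1 (hν.eq_zero _ hz hz0)]⟩
  have hyt : ν y ≠ ∞ := ne_top_of_le_ne_top ENNReal.one_ne_top (le_self_add.trans hsum)
  have hzt : ν (x - y) ≠ ∞ := ne_top_of_le_ne_top ENNReal.one_ne_top (le_add_self.trans hsum)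
  have hypos : 0 < (ν y).toReal := ENNReal.toReal_pos hy0 hyt
  have hzpos : 0 < (ν (x - y)).toReal := ENNReal.toReal_pos hz0 hzt
  have hsum' : (ν y).toReal + (ν (x - y)).toReal ≤ 1 := by
    rw [← ENNReal.toReal_add hyt hzt]
    exact ENNReal.toReal_le_of_le_ofReal zero_le_one (by simpa using hsum)
  have hz1 : 0 < 1 - (ν y).toReal := by linarith
  have hmemy := hν.inv_smul_mem hy hypos (ENNReal.ofReal_toReal hyt).ge
  have hmemz := hν.inv_smul_mem hz hz1
    ((ENNReal.le_ofReal_iff_toReal_le hzt hz1.le).2 (by linarith))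
  have hxy := hext _ hmemy _ hmemz ⟨_, _, hypos, hz1, by ring, by
    rw [smul_inv_smul₀ hypos.ne', smul_inv_smul₀ hz1.ne', add_sub_cancel]⟩
  exact ⟨(ν y).toReal, by rw [← hxy, smul_inv_smul₀ hypos.ne']⟩

variable [TopologicalSpace W] [T2Space W] [IsTopologicalAddGroup W] [ContinuousSMul ℝ W]
  [LocallyConvexSpace ℝ W]

/- Bauer's minimum principle. -/
theorem exists_mem_extremePoints_apply_le {K : Set W} (hK : IsCompact K) (l : W →L[ℝ] ℝ) {x : W}
    (hx : x ∈ K) : ∃ y ∈ K.extremePoints ℝ, l y ≤ l x := by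
  have hexp : IsExposed ℝ K ((-l).toExposed K) :=
    ContinuousLinearMap.toExposed.isExposed
  obtain ⟨z, hz, hmin⟩ := hK.exists_isMinOn ⟨x, hx⟩ l.continuous.continuousOn
  obtain ⟨y, hy⟩ := (hexp.isCompact hK).extremePoints_nonempty
    ⟨z, hz, fun w hw ↦ neg_le_neg (hmin hw)⟩
  exact ⟨y, hexp.isExtreme.extremePoints_subset_extremePoints hy, neg_le_neg_iff.1 (hy.1.2 x hx)⟩

theorem IsCapGauge.exists_isExtremal_apply_neg (hν : IsCapGauge C ν)
    (hK : IsCompact {y ∈ C | ν y ≤ 1}) (l : W →L[ℝ] ℝ) {x : W} (hx : x ∈ C) (hνx : ν x ≤ 1)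
    (hlx : l x < 0) : ∃ y, IsExtremal C y ∧ l y < 0 := by
  obtain ⟨y, hy, hle⟩ := exists_mem_extremePoints_apply_le hK l ⟨hx, hνx⟩
  exact ⟨y, hν.isExtremal_of_mem_extremePoints hy, hle.trans_lt hlx⟩

end Extremal

section Mass

variable {X ι : Type*} {e : ι → X} {δ : ι → ℝ≥0}

theorem isCompact_of_isClosed_of_forall_abs_le {s : Set (X → ℝ)} (hs : IsClosed s)
    (hbd : ∀ x, ∃ B, ∀ φ ∈ s, |φ x| ≤ B) : IsCompact s := by
  choose B hB using hbd
  exact (isCompact_univ_pi fun x ↦ isCompact_Icc).of_isClosed_subset hs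
    fun φ hφ x _ ↦ abs_le.1 (hB x φ hφ)

/-- The weighted sum of the positive parts of the values of `φ` on the family `e`. -/
noncomputable def mass (e : ι → X) (δ : ι → ℝ≥0) (φ : X → ℝ) : ℝ≥0∞ :=
  ∑' i, ENNReal.ofReal (φ (e i)) * δ i

theorem lowerSemicontinuous_mass : LowerSemicontinuous (mass e δ) :=
  lowerSemicontinuous_tsum fun i ↦ Continuous.lowerSemicontinuous <|
    (ENNReal.continuous_mul_const ENNReal.coe_ne_top).comp
      (ENNReal.continuous_ofReal.comp (continuous_apply (e i)))

theorem apply_le_inv_of_mass_le_one (hδ : ∀ i, 0 < δ i) {φ : X → ℝ} (hφ : mass e δ φ ≤ 1) (i : ι) :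
    φ (e i) ≤ (δ i : ℝ)⁻¹ := by
  have hle : ENNReal.ofReal (φ (e i)) * δ i ≤ 1 := (ENNReal.le_tsum i).trans hφ
  rw [← ENNReal.ofReal_coe_nnreal, ← ENNReal.ofReal_mul' (δ i).coe_nonneg,
    ENNReal.ofReal_le_one] at hle
  rwa [← one_div, le_div_iff₀ (NNReal.coe_pos.2 (hδ i))]

end Mass

section WeakDualCone

variable {V ι : Type*} [AddCommGroup V] [Module ℝ V] {D : Set V} {e : ι → V} {δ : ι → ℝ≥0}

theorem exists_forall_abs_le_of_span_eq_top (he : Submodule.span ℝ (Set.range e) = ⊤)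
    {s : Set (Module.Dual ℝ V)} (hbd : ∀ i, ∃ B, ∀ L ∈ s, |L (e i)| ≤ B) (v : V) :
    ∃ B, ∀ L ∈ s, |L v| ≤ B := by
  have hv : v ∈ Submodule.span ℝ (Set.range e) := he ▸ Submodule.mem_top
  induction hv using Submodule.span_induction with
  | mem v hv => exact hv.elim fun i hi ↦ hi ▸ hbd i
  | zero => exact ⟨0, fun L _ ↦ by simp⟩
  | add v w _ _ hv hw =>
    obtain ⟨B, hB⟩ := hv
    obtain ⟨B', hB'⟩ := hw
    exact ⟨B + B', fun L hL ↦ by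
      rw [map_add]
      exact (abs_add_le _ _).trans (add_le_add (hB L hL) (hB' L hL))⟩
  | smul r v _ hv =>
    obtain ⟨B, hB⟩ := hv
    exact ⟨|r| * B, fun L hL ↦ by
      rw [map_smul, smul_eq_mul, abs_mul]
      exact mul_le_mul_of_nonneg_left (hB L hL) (abs_nonneg r)⟩

/-- The functionals nonnegative on `D`, inside the product space `V → ℝ`, whose topology makes
them the positive functionals with the weak-* topology. -/
abbrev weakDualCone (D : Set V) : PointedCone ℝ (V → ℝ) :=
  (positiveFunctionals D).map (LinearMap.ltoFun ℝ V ℝ ℝ)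

theorem isCapGauge_mass (heD : ∀ i, e i ∈ D) (he : Submodule.span ℝ (Set.range e) = ⊤)
    (hδ : ∀ i, 0 < δ i) : IsCapGauge (weakDualCone D) (mass e δ) where
  map_add := by
    rintro _ ⟨L, hL, rfl⟩ _ ⟨M, hM, rfl⟩
    simp only [mass, ← ENNReal.tsum_add, ← add_mul]
    exact tsum_congr fun i ↦ congrArg (· * _) (ENNReal.ofReal_add (hL (heD i)) (hM (heD i)))
  map_smul r hr φ _ := by
    simp only [mass, ← ENNReal.tsum_mul_left, ← mul_assoc, ← ENNReal.ofReal_mul hr.le]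
    rfl
  eq_zero := by
    rintro _ ⟨L, hL, rfl⟩ hzero
    have hL0 : L = 0 := LinearMap.ext_on_range he fun i ↦ by
      have hi := (mul_eq_zero.1 (ENNReal.tsum_eq_zero.1 hzero i)).resolve_right
        (ENNReal.coe_ne_zero.2 (hδ i).ne')
      exact le_antisymm (ENNReal.ofReal_eq_zero.1 hi) (hL (heD i))
    rw [hL0, map_zero]

theorem isClosed_weakDualCone : IsClosed (weakDualCone D : Set (V → ℝ)) := by
  have heq : (weakDualCone D : Set (V → ℝ)) =
      Set.range ((↑) : (V →ₗ[ℝ] ℝ) → V → ℝ) ∩ ⋂ d ∈ D, {φ | 0 ≤ φ d} := by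
    ext φ
    simp only [Set.mem_inter_iff, Set.mem_iInter, Set.mem_ofPred_eq]
    constructor
    · rintro ⟨L, hL, rfl⟩
      exact ⟨⟨L, rfl⟩, fun d hd ↦ hL hd⟩
    · rintro ⟨⟨L, rfl⟩, hL⟩
      exact ⟨L, fun d hd ↦ hL d hd, rfl⟩
  rw [heq]
  exact (LinearMap.isClosed_range_coe V ℝ (RingHom.id ℝ)).inter <| isClosed_biInter fun d _ ↦
    isClosed_le continuous_const (continuous_apply d)

theorem isCompact_cap_mass (heD : ∀ i, e i ∈ D) (he : Submodule.span ℝ (Set.range e) = ⊤)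
    (hδ : ∀ i, 0 < δ i) : IsCompact {φ ∈ weakDualCone D | mass e δ φ ≤ 1} := by
  refine isCompact_of_isClosed_of_forall_abs_le
    (isClosed_weakDualCone.inter (lowerSemicontinuous_mass.isClosed_preimage 1)) fun v ↦ ?_
  obtain ⟨B, hB⟩ := exists_forall_abs_le_of_span_eq_top he
    (s := {L | L ∈ positiveFunctionals D ∧ mass e δ L ≤ 1}) (fun i ↦ ⟨(δ i : ℝ)⁻¹, fun L hL ↦
      (abs_of_nonneg (hL.1 (heD i))).trans_le (apply_le_inv_of_mass_le_one hδ hL.2 i)⟩) v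
  refine ⟨B, ?_⟩
  rintro _ ⟨⟨L, hL, rfl⟩, hmass⟩
  exact hB L ⟨hL, hmass⟩

theorem exists_isExtremal_apply_neg [Countable ι] (heD : ∀ i, e i ∈ D)
    (he : Submodule.span ℝ (Set.range e) = ⊤) {L : Module.Dual ℝ V}
    (hL : L ∈ positiveFunctionals D) {a : V} (ha : L a < 0) :
    ∃ M, IsExtremal (positiveFunctionals D) M ∧ M a < 0 := by
  obtain ⟨δ, hδ, hmass⟩ := ENNReal.exists_pos_tsum_mul_lt_of_countable one_ne_zero
    (fun i ↦ ENNReal.ofReal (L (e i))) fun _ ↦ ENNReal.ofReal_ne_top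
  obtain ⟨_, hφ, hφa⟩ := (isCapGauge_mass heD he hδ).exists_isExtremal_apply_neg
    (isCompact_cap_mass heD he hδ) (ContinuousLinearMap.proj a) ⟨L, hL, rfl⟩ hmass.le ha
  obtain ⟨M, -, rfl⟩ := hφ.1
  exact ⟨M, hφ.of_map DFunLike.coe_injective, hφa⟩

theorem exists_countable_family_isInPreordering_span_eq_top {A : Type*} [CommRing A] [Algebra ℝ A]
    [hA : Algebra.FiniteType ℝ A] (S : Set A) :
    ∃ (ι : Type) (_ : Countable ι) (e : ι → A), (∀ i, IsInPreordering S (e i)) ∧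
      Submodule.span ℝ (Set.range e) = ⊤ := by
  obtain ⟨n, π, hπ⟩ := Algebra.FiniteType.iff_quotient_mvPolynomial''.1 hA
  let p : (Fin n →₀ ℕ) → A := fun u ↦ π (MvPolynomial.monomial u 1)
  let e : (Fin n →₀ ℕ) ⊕ (Fin n →₀ ℕ) → A :=
    Sum.elim (fun u ↦ (p u + 1) ^ 2) fun u ↦ (p u - 1) ^ 2
  refine ⟨_, inferInstance, e, Sum.rec (fun u ↦ .sq _) fun u ↦ .sq _, ?_⟩
  have hp (u : Fin n →₀ ℕ) : p u ∈ Submodule.span ℝ (Set.range e) := by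
    rw [eq_smul_sq_add_one_sub_sq_sub_one (p u)]
    exact Submodule.smul_mem _ _ (Submodule.sub_mem _ (Submodule.subset_span ⟨.inl u, rfl⟩)
      (Submodule.subset_span ⟨.inr u, rfl⟩))
  refine Submodule.eq_top_iff'.2 fun x ↦ ?_
  obtain ⟨q, rfl⟩ := hπ x
  induction q using MvPolynomial.induction_on' with
  | monomial u r =>
    rw [← mul_one r, ← smul_eq_mul, ← MvPolynomial.smul_monomial, map_smul]
    exact Submodule.smul_mem _ _ (hp u)
  | add q q' hq hq' => exact map_add π q q' ▸ Submodule.add_mem _ hq hq'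

end WeakDualCone

/-! ### The character space -/

section CharacterSpace

variable {A : Type*} [CommRing A] [Algebra ℝ A]

instance : BorelSpace (A →ₐ[ℝ] ℝ) := ⟨rfl⟩

theorem continuous_algHom_apply (a : A) : Continuous fun χ : A →ₐ[ℝ] ℝ ↦ χ a :=
  (continuous_apply a).comp continuous_induced_dom

theorem isClosed_KSet (S : Set A) : IsClosed (KSet S) := by
  have hK : KSet S = ⋂ a ∈ preordering S, {χ | 0 ≤ χ a} := by
    ext χ
    simp [KSet, preordering]
  rw [hK]
  exact isClosed_biInter fun a _ ↦ isClosed_le continuous_const (continuous_algHom_apply a)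

theorem range_coe_algHom :
    range ((↑) : (A →ₐ[ℝ] ℝ) → A → ℝ) =
      range ((↑) : (A →ₗ[ℝ] ℝ) → A → ℝ) ∩ {φ | φ 1 = 1 ∧ ∀ a b, φ (a * b) = φ a * φ b} := by
  ext φ
  constructor
  · rintro ⟨χ, rfl⟩
    exact ⟨⟨χ.toLinearMap, rfl⟩, map_one χ, map_mul χ⟩
  · rintro ⟨⟨L, rfl⟩, hone, hmul⟩
    exact ⟨AlgHom.ofLinearMap L hone hmul, rfl⟩

theorem isClosedEmbedding_coe_algHom :
    Topology.IsClosedEmbedding ((↑) : (A →ₐ[ℝ] ℝ) → A → ℝ) := by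
  have hone : IsClosed {φ : A → ℝ | φ 1 = 1} :=
    isClosed_eq (continuous_apply 1) continuous_const
  have hmul : IsClosed {φ : A → ℝ | ∀ a b, φ (a * b) = φ a * φ b} := by
    simp only [Set.ofPred_forall]
    exact isClosed_iInter fun a ↦ isClosed_iInter fun b ↦ isClosed_eq (continuous_apply _)
      ((continuous_apply a).mul (continuous_apply b))
  refine ⟨⟨⟨rfl⟩, DFunLike.coe_injective⟩, ?_⟩
  rw [range_coe_algHom]
  exact (LinearMap.isClosed_range_coe A ℝ (RingHom.id ℝ)).inter (hone.inter hmul)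

instance : T2Space (A →ₐ[ℝ] ℝ) :=
  isClosedEmbedding_coe_algHom.isEmbedding.t2Space

theorem isCompact_of_isClosed_of_forall_abs_apply_le {K : Set (A →ₐ[ℝ] ℝ)} (hK : IsClosed K)
    (hbd : ∀ a, ∃ B, ∀ χ ∈ K, |χ a| ≤ B) : IsCompact K := by
  have he := isClosedEmbedding_coe_algHom (A := A)
  refine he.isInducing.isCompact_iff.2 (isCompact_of_isClosed_of_forall_abs_le
    (he.isClosedMap K hK) fun a ↦ ?_)
  obtain ⟨B, hB⟩ := hbd a
  exact ⟨B, Set.forall_mem_image.2 hB⟩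

theorem exists_forall_abs_apply_le_of_adjoin_eq_top {s : Set A} (hs : Algebra.adjoin ℝ s = ⊤)
    {K : Set (A →ₐ[ℝ] ℝ)} (hbd : ∀ x ∈ s, ∃ B, ∀ χ ∈ K, |χ x| ≤ B) (a : A) :
    ∃ B, ∀ χ ∈ K, |χ a| ≤ B := by
  induction (hs ▸ trivial : a ∈ Algebra.adjoin ℝ s) using Algebra.adjoin_induction with
  | mem x hx => exact hbd x hx
  | algebraMap r => exact ⟨|r|, fun χ _ ↦ by rw [AlgHom.commutes]; rfl⟩
  | add x y _ _ hx hy =>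
    obtain ⟨⟨B, hB⟩, ⟨D, hD⟩⟩ := hx, hy
    refine ⟨B + D, fun χ hχ ↦ ?_⟩
    rw [map_add]
    exact (abs_add_le _ _).trans (add_le_add (hB χ hχ) (hD χ hχ))
  | mul x y _ _ hx hy =>
    obtain ⟨⟨B, hB⟩, ⟨D, hD⟩⟩ := hx, hy
    refine ⟨B * D, fun χ hχ ↦ ?_⟩
    rw [map_mul, abs_mul]
    exact mul_le_mul (hB χ hχ) (hD χ hχ) (abs_nonneg _) ((abs_nonneg _).trans (hB χ hχ))

variable (A) in
theorem exists_nonneg_isCompact_setOf_apply_le [Algebra.FiniteType ℝ A] :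
    ∃ p : A, (∀ χ : A →ₐ[ℝ] ℝ, 0 ≤ χ p) ∧ ∀ r, IsCompact {χ : A →ₐ[ℝ] ℝ | χ p ≤ r} := by
  obtain ⟨s, hs⟩ := Algebra.FiniteType.out (R := ℝ) (A := A)
  have happly (χ : A →ₐ[ℝ] ℝ) : χ (∑ x ∈ s, x ^ 2) = ∑ x ∈ s, χ x ^ 2 := by
    simp only [map_sum, map_pow]
  refine ⟨∑ x ∈ s, x ^ 2, fun χ ↦ ?_, fun r ↦ ?_⟩
  · exact happly χ ▸ Finset.sum_nonneg fun x _ ↦ sq_nonneg _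
  · refine isCompact_of_isClosed_of_forall_abs_apply_le
      (isClosed_le (continuous_algHom_apply _) continuous_const)
      (exists_forall_abs_apply_le_of_adjoin_eq_top hs fun x hx ↦ ⟨√r, fun χ hχ ↦ ?_⟩)
    refine Real.abs_le_sqrt (le_trans ?_ ((happly χ).symm.trans_le hχ))
    exact Finset.single_le_sum (f := fun x ↦ χ x ^ 2) (fun _ _ ↦ sq_nonneg _) hx

end CharacterSpace

/-! ### Haviland's theorem -/

open CompactlySupported Filter Topology

section RieszExtension

variable {E F G : Type*} [AddCommGroup E] [Module ℝ E] [AddCommGroup F] [Module ℝ F]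
  [AddCommGroup G] [PartialOrder G] [IsOrderedAddMonoid G] [Module ℝ G] [PosSMulMono ℝ G]

theorem exists_linearMap_sandwich (f : E →ₗ[ℝ] G) (g : F →ₗ[ℝ] G) (L : E →ₗ[ℝ] ℝ)
    (hL : ∀ x, 0 ≤ f x → 0 ≤ L x) (hfg : ∀ y, ∃ x, g y ≤ f x) :
    ∃ Λ : F →ₗ[ℝ] ℝ, (∀ x y, g y ≤ f x → Λ y ≤ L x) ∧ ∀ x y, f x ≤ g y → L x ≤ Λ y := by
  let s : PointedCone ℝ (E × F) := (PointedCone.positive ℝ G).comap (f.coprod g)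
  have mem_s (x : E) (y : F) : (x, y) ∈ s ↔ 0 ≤ f x + g y := Iff.rfl
  let L₀ : (E × F) →ₗ.[ℝ] ℝ :=
    { domain := Submodule.prod ⊤ ⊥
      toFun := (L ∘ₗ LinearMap.fst ℝ E F).domRestrict _ }
  obtain ⟨Φ, hΦ, hΦs⟩ := riesz_extension s L₀
    (by
      rintro ⟨⟨x, y⟩, hxy⟩ hx
      obtain rfl : y = 0 := hxy.2
      exact hL x (by simpa [mem_s] using hx))
    (by
      rintro ⟨x, y⟩
      obtain ⟨z, hz⟩ := hfg (-y)
      refine ⟨⟨(z - x, 0), trivial, rfl⟩, ?_⟩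
      simpa [mem_s, neg_le_iff_add_nonneg] using hz)
  have hΦL (x : E) : Φ (x, 0) = L x := hΦ ⟨(x, 0), trivial, rfl⟩
  refine ⟨Φ ∘ₗ LinearMap.inr ℝ E F, fun x y hxy ↦ ?_, fun x y hxy ↦ ?_⟩
  · have hΦxy : 0 ≤ Φ ((x, 0) - (0, y)) := hΦs _ (by simpa [s] using hxy)
    rwa [map_sub, hΦL, sub_nonneg] at hΦxy
  · have hΦxy : 0 ≤ Φ ((0, y) - (x, 0)) := hΦs _ (by simpa [s] using hxy)
    rwa [map_sub, hΦL, sub_nonneg] at hΦxy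

end RieszExtension

theorem integrable_and_integral_eq_of_tendsto_of_monotone {X : Type*} [MeasurableSpace X]
    {μ : Measure X} {F : ℕ → X → ℝ} {φ : X → ℝ} {l : ℝ} (hF : ∀ n, Integrable (F n) μ)
    (hF₀ : ∀ n, 0 ≤ᵐ[μ] F n) (hmono : ∀ᵐ x ∂μ, Monotone fun n ↦ F n x)
    (hφ : ∀ᵐ x ∂μ, Tendsto (fun n ↦ F n x) atTop (𝓝 (φ x)))
    (hl : Tendsto (fun n ↦ ∫ x, F n x ∂μ) atTop (𝓝 l)) :
    Integrable φ μ ∧ ∫ x, φ x ∂μ = l := by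
  have hφ₀ : 0 ≤ᵐ[μ] φ := by
    filter_upwards [ae_all_iff.2 hF₀, hφ] with x hx hlim
    exact ge_of_tendsto' hlim hx
  have hlint : ∫⁻ x, ENNReal.ofReal (φ x) ∂μ = ENNReal.ofReal l := by
    refine tendsto_nhds_unique (lintegral_tendsto_of_tendsto_of_monotone
      (fun n ↦ (hF n).aestronglyMeasurable.aemeasurable.ennreal_ofReal) ?_ ?_)
      ((ENNReal.tendsto_ofReal hl).congr fun n ↦
        ofReal_integral_eq_lintegral_ofReal (hF n) (hF₀ n))
    · exact hmono.mono fun x hx _ _ hnk ↦ ENNReal.ofReal_le_ofReal (hx hnk)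
    · exact hφ.mono fun x hx ↦ ENNReal.tendsto_ofReal hx
  have hint : Integrable φ μ :=
    ⟨aestronglyMeasurable_of_tendsto_ae _ (fun n ↦ (hF n).aestronglyMeasurable) hφ,
      (hasFiniteIntegral_iff_ofReal hφ₀).2 (hlint ▸ ENNReal.ofReal_lt_top)⟩
  exact ⟨hint, tendsto_nhds_unique (integral_tendsto_of_tendsto_of_monotone hF hint hmono hφ) hl⟩

theorem locallyCompactSpace_of_isCompact_setOf_le {X : Type*} [TopologicalSpace X] [T2Space X]
    {q : X → ℝ} (hq : Continuous q) (hqc : ∀ r, IsCompact {x | q x ≤ r}) :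
    LocallyCompactSpace X :=
  have : WeaklyLocallyCompactSpace X :=
    ⟨fun x ↦ ⟨{y | q y ≤ q x + 1}, hqc _,
      hq.continuousAt.eventually_le_const (lt_add_one (q x))⟩⟩
  inferInstance

theorem tendsto_sub_div_add_one (b c : ℝ) :
    Tendsto (fun n : ℕ ↦ b - c / (n + 1)) atTop (𝓝 b) := by
  have h := (tendsto_one_div_add_atTop_nhds_zero_nat (𝕜 := ℝ)).const_mul c
  simpa [div_eq_mul_inv] using h.const_sub b

section Cutoff

variable {X : Type*} [TopologicalSpace X] {q : C(X, ℝ)}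

/-- The cutoff functions `max 0 (1 - q / (n + 1))`, which exhaust `X` when the sublevel sets of `q`
are compact. -/
noncomputable def cutoff (hqc : ∀ r, IsCompact {x | q x ≤ r}) (n : ℕ) : C_c(X, ℝ) where
  toFun x := max 0 (1 - q x / (n + 1))
  continuous_toFun := by fun_prop
  hasCompactSupport' := HasCompactSupport.intro' (hqc (n + 1))
    (isClosed_le q.continuous continuous_const) fun x hx ↦ by
      have hx' : (n + 1 : ℝ) ≤ q x := (not_le.1 hx).le
      exact max_eq_left (sub_nonpos.2 ((one_le_div (by positivity)).2 hx'))

variable (hqc : ∀ r, IsCompact {x | q x ≤ r})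

theorem cutoff_nonneg (n : ℕ) (x : X) : 0 ≤ cutoff hqc n x := le_max_left _ _

theorem one_sub_div_le_cutoff (n : ℕ) (x : X) : 1 - q x / (n + 1) ≤ cutoff hqc n x :=
  le_max_right _ _

theorem cutoff_le_one (hq : 0 ≤ q) (n : ℕ) (x : X) : cutoff hqc n x ≤ 1 :=
  max_le zero_le_one (sub_le_self _ (div_nonneg (hq x) (by positivity)))

theorem monotone_cutoff (hq : 0 ≤ q) (x : X) : Monotone fun n ↦ cutoff hqc n x := by
  intro n k hnk
  have hqx : 0 ≤ q x := hq x
  change max 0 (1 - q x / (n + 1)) ≤ max 0 (1 - q x / (k + 1))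
  gcongr

theorem tendsto_cutoff (hq : 0 ≤ q) (x : X) :
    Tendsto (fun n ↦ cutoff hqc n x) atTop (𝓝 1) :=
  tendsto_of_tendsto_of_tendsto_of_le_of_le (tendsto_sub_div_add_one 1 (q x)) tendsto_const_nhds
    (fun n ↦ one_sub_div_le_cutoff hqc n x) fun n ↦ cutoff_le_one hqc hq n x

end Cutoff

section Haviland

variable {X : Type*} [TopologicalSpace X] {A : Type*} [CommRing A] [Algebra ℝ A]
  {ev : A →ₐ[ℝ] C(X, ℝ)} {L : A →ₗ[ℝ] ℝ}

theorem exists_positiveLinearMap_sandwich (hL : ∀ a, 0 ≤ ev a → 0 ≤ L a) :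
    ∃ Λ : C_c(X, ℝ) →ₚ[ℝ] ℝ, (∀ a (φ : C_c(X, ℝ)), (∀ x, φ x ≤ ev a x) → Λ φ ≤ L a) ∧
      ∀ a (φ : C_c(X, ℝ)), (∀ x, ev a x ≤ φ x) → L a ≤ Λ φ := by
  let coe : C_c(X, ℝ) →ₗ[ℝ] X → ℝ :=
    { CompactlySupportedContinuousMap.coeFnMonoidHom with
      map_smul' := CompactlySupportedContinuousMap.coe_smul }
  obtain ⟨Λ, hle, hge⟩ := exists_linearMap_sandwich
    (ContinuousMap.coeFnLinearMap ℝ ∘ₗ ev.toLinearMap : A →ₗ[ℝ] X → ℝ) coe L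
    (fun a ha ↦ hL a ha) fun φ ↦ by
      obtain ⟨C, hC⟩ := φ.hasCompactSupport.exists_bound_of_continuous φ.continuous
      refine ⟨algebraMap ℝ A C, fun x ↦ ?_⟩
      change φ x ≤ ev (algebraMap ℝ A C) x
      rw [AlgHom.commutes]
      exact (le_abs_self _).trans (hC x)
  refine ⟨.mk₀ Λ fun φ hφ ↦ ?_, hle, hge⟩
  rw [← map_zero L]
  refine hge 0 φ fun x ↦ ?_
  change ev 0 x ≤ φ x
  rw [map_zero]
  exact hφ x

variable {p : A}

theorem tendsto_apply_smul_cutoff (hpc : ∀ r, IsCompact {x | ev p x ≤ r}) (hp : 0 ≤ ev p)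
    {Λ : C_c(X, ℝ) → ℝ}
    (hle : ∀ a (φ : C_c(X, ℝ)), (∀ x, φ x ≤ ev a x) → Λ φ ≤ L a)
    (hge : ∀ a (φ : C_c(X, ℝ)), (∀ x, ev a x ≤ φ x) → L a ≤ Λ φ) {a : A} (ha : 0 ≤ ev a) :
    Tendsto (fun n ↦ Λ (ev a • cutoff hpc n)) atTop (𝓝 (L a)) := by
  refine tendsto_of_tendsto_of_tendsto_of_le_of_le (tendsto_sub_div_add_one (L a) (L (a * p)))
    tendsto_const_nhds (fun n ↦ ?_) fun n ↦ hle a _ fun x ↦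
      mul_le_of_le_one_right (ha x) (cutoff_le_one hpc hp n x)
  have hL : L a - L (a * p) / (n + 1) = L (a - (n + 1 : ℝ)⁻¹ • (a * p)) := by
    rw [map_sub, map_smul, smul_eq_mul, inv_mul_eq_div]
  refine hL.trans_le (hge _ _ fun x ↦ ?_)
  calc ev (a - (n + 1 : ℝ)⁻¹ • (a * p)) x = ev a x * (1 - ev p x / (n + 1)) := by
        simp only [map_sub, map_smul, map_mul, ContinuousMap.sub_apply, ContinuousMap.smul_apply,
          ContinuousMap.mul_apply, smul_eq_mul]
        ring
    _ ≤ ev a x * cutoff hpc n x :=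
        mul_le_mul_of_nonneg_left (one_sub_div_le_cutoff hpc n x) (ha x)

variable [T2Space X] [MeasurableSpace X] [BorelSpace X]

theorem exists_measure_forall_integral_eq (hpc : ∀ r, IsCompact {x | ev p x ≤ r}) (hp : 0 ≤ ev p)
    (hL : ∀ a, 0 ≤ ev a → 0 ≤ L a) :
    ∃ μ : Measure X, ∀ a, Integrable (ev a) μ ∧ ∫ x, ev a x ∂μ = L a := by
  have := locallyCompactSpace_of_isCompact_setOf_le (ev p).continuous hpc
  obtain ⟨Λ, hle, hge⟩ := exists_positiveLinearMap_sandwich hL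
  have hnonneg {a : A} (ha : 0 ≤ ev a) : Integrable (ev a) (RealRMK.rieszMeasure Λ) ∧
      ∫ x, ev a x ∂(RealRMK.rieszMeasure Λ) = L a := by
    refine integrable_and_integral_eq_of_tendsto_of_monotone
      (F := fun n ↦ ev a • cutoff hpc n) (fun n ↦ ?_) ?_ ?_ ?_ ?_
    · exact (ev a • cutoff hpc n).continuous.integrable_of_hasCompactSupport
        (ev a • cutoff hpc n).hasCompactSupport
    · exact fun n ↦ ae_of_all _ fun x ↦ mul_nonneg (ha x) (cutoff_nonneg hpc n x)
    · exact ae_of_all _ fun x ↦ (monotone_cutoff hpc hp x).const_mul (ha x)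
    · exact ae_of_all _ fun x ↦ by simpa using (tendsto_cutoff hpc hp x).const_mul (ev a x)
    · exact (tendsto_apply_smul_cutoff hpc hp hle hge ha).congr fun n ↦
        (RealRMK.integral_rieszMeasure Λ _).symm
  have hsq (a : A) : 0 ≤ ev (a ^ 2) := fun x ↦ by
    rw [map_pow]
    exact sq_nonneg (ev a x)
  refine ⟨RealRMK.rieszMeasure Λ, fun a ↦ ?_⟩
  obtain ⟨hint₁, heq₁⟩ := hnonneg (hsq (a + 1))
  obtain ⟨hint₂, heq₂⟩ := hnonneg (hsq (a - 1))
  have hev : ⇑(ev a) = (1 / 4 : ℝ) • (⇑(ev ((a + 1) ^ 2)) - ev ((a - 1) ^ 2)) := by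
    conv_lhs => rw [eq_smul_sq_add_one_sub_sq_sub_one a]
    simp
  have hLa : L a = (1 / 4 : ℝ) • (L ((a + 1) ^ 2) - L ((a - 1) ^ 2)) := by
    conv_lhs => rw [eq_smul_sq_add_one_sub_sq_sub_one a]
    simp
  rw [hev, hLa]
  refine ⟨(hint₁.sub hint₂).smul _, ?_⟩
  simp only [Pi.smul_apply, Pi.sub_apply]
  rw [integral_smul, integral_sub hint₁ hint₂, heq₁, heq₂]

end Haviland

theorem isKMomentFunctional_of_forall_nonneg {A : Type*} [CommRing A] [Algebra ℝ A]
    [Algebra.FiniteType ℝ A] {S : Set A} {L : A →ₗ[ℝ] ℝ}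
    (hL : ∀ a, (∀ χ ∈ KSet S, 0 ≤ χ a) → 0 ≤ L a) : IsKMomentFunctional S L := by
  obtain ⟨p, hp, hpc⟩ := exists_nonneg_isCompact_setOf_apply_le A
  have hK : IsClosed (KSet S) := isClosed_KSet S
  let ev : A →ₐ[ℝ] C(KSet S, ℝ) := AlgHom.ofLinearMap
    { toFun a := ⟨fun χ ↦ χ.1 a, (continuous_algHom_apply a).comp continuous_subtype_val⟩
      map_add' a b := ContinuousMap.ext fun χ ↦ map_add χ.1 a b
      map_smul' r a := ContinuousMap.ext fun χ ↦ map_smul χ.1 r a }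
    (ContinuousMap.ext fun χ ↦ map_one χ.1) fun a b ↦ ContinuousMap.ext fun χ ↦ map_mul χ.1 a b
  obtain ⟨μ, hμ⟩ := exists_measure_forall_integral_eq (ev := ev) (p := p) (L := L)
    (fun r ↦ hK.isClosedEmbedding_subtypeVal.isCompact_preimage (hpc r)) (fun χ ↦ hp χ.1)
    fun a ha ↦ hL a fun χ hχ ↦ ha ⟨χ, hχ⟩
  have hval : MeasurableEmbedding ((↑) : KSet S → A →ₐ[ℝ] ℝ) :=
    .subtype_coe hK.measurableSet
  refine ⟨μ.map (↑), ?_, fun a ↦ ⟨?_, ?_⟩⟩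
  · rw [hval.map_apply, preimage_compl, Subtype.coe_preimage_self, compl_univ, measure_empty]
  · exact (hval.integrable_map_iff (g := fun χ ↦ χ a)).2 (hμ a).1
  · rw [hval.integral_map]
    exact (hμ a).2.symm

/-! ### Fibres -/

section Fibres

variable {A : Type*} [CommRing A] {S S' : Set A}

theorem preordering_mono (hS : S ⊆ S') : preordering S ⊆ preordering S' := by
  intro a ha
  induction ha with
  | sq a => exact .sq a
  | gen ha => exact .gen (hS ha)
  | add _ _ iha ihb => exact .add iha ihb
  | mul _ _ iha ihb => exact .mul iha ihb

variable [Algebra ℝ A]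

theorem apply_nonneg_of_isKMomentFunctional {L : A →ₗ[ℝ] ℝ} (hL : IsKMomentFunctional S L) {a : A}
    (ha : ∀ χ ∈ KSet S, 0 ≤ χ a) : 0 ≤ L a := by
  obtain ⟨μ, hμ, hint⟩ := hL
  have hae : ∀ᵐ χ ∂μ, χ ∈ KSet S := mem_ae_iff.2 hμ
  rw [(hint a).2]
  exact integral_nonneg_of_ae (hae.mono ha)

theorem eq_zero_of_apply_one_eq_zero {L : A →ₗ[ℝ] ℝ}
    (hL : L ∈ positiveFunctionals (preordering S)) (hone : L 1 = 0) : L = 0 := by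
  ext a
  have hcs := sq_apply_mul_le (apply_sq_nonneg hL) a 1
  rw [one_pow, hone, mul_zero, mul_one] at hcs
  exact pow_eq_zero_iff two_ne_zero |>.1 (hcs.antisymm (sq_nonneg _))

theorem eq_zero_of_KSet_eq_empty [Algebra.FiniteType ℝ A] (hS : S.Finite) (hK : KSet S = ∅)
    {L : A →ₗ[ℝ] ℝ} (hL : L ∈ positiveFunctionals (preordering S)) : L = 0 := by
  have hneg : 0 ≤ L (-1) := hL (isInPreordering_neg_one hS hK)
  rw [map_neg, neg_nonneg] at hneg
  exact eq_zero_of_apply_one_eq_zero hL (hneg.antisymm (hL isInPreordering_one))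

theorem IsExtremal.exists_forall_apply_mul_eq [Algebra.FiniteType ℝ A] (hS : S.Finite)
    {M : A →ₗ[ℝ] ℝ} (hM : IsExtremal (positiveFunctionals (preordering S)) M) {b : A} {C : ℝ}
    (hbd : ∀ χ ∈ KSet S, |χ b| ≤ C) : ∃ r : ℝ, ∀ x, M (b * x) = r * M x := by
  obtain ⟨c, hc, hmem⟩ := exists_smul_add_sub_comp_mulLeft_mem hS hbd
  obtain ⟨r, hr⟩ := hM.exists_eq_smul hc (hmem M hM.1).1 (hmem M hM.1).2
  exact ⟨r, LinearMap.congr_fun hr⟩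

variable {k m : ℕ} {f : Fin k → A} {h : Fin m → A} {lam : Fin m → ℝ}

theorem range_subset_fibreGens : range f ⊆ fibreGens f h lam := subset_union_left

theorem finite_fibreGens : (fibreGens f h lam).Finite :=
  (finite_range f).union (finite_iUnion fun _ ↦ toFinite _)

theorem sub_algebraMap_mem_fibreGens (j : Fin m) :
    h j - algebraMap ℝ A (lam j) ∈ fibreGens f h lam :=
  .inr (mem_iUnion.2 ⟨j, .inl rfl⟩)

theorem algebraMap_sub_mem_fibreGens (j : Fin m) :
    algebraMap ℝ A (lam j) - h j ∈ fibreGens f h lam :=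
  .inr (mem_iUnion.2 ⟨j, .inr rfl⟩)

theorem apply_sub_algebraMap (χ : A →ₐ[ℝ] ℝ) (a : A) (r : ℝ) :
    χ (a - algebraMap ℝ A r) = χ a - r := by
  rw [map_sub, AlgHom.commutes, Algebra.algebraMap_self_apply]

theorem mem_KSet_fibreGens_iff {χ : A →ₐ[ℝ] ℝ} :
    χ ∈ KSet (fibreGens f h lam) ↔ χ ∈ KSet (range f) ∧ ∀ j, χ (h j) = lam j := by
  refine ⟨fun hχ ↦ ⟨fun a ha ↦ hχ a (preordering_mono range_subset_fibreGens ha), fun j ↦ ?_⟩,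
    fun ⟨hχ, hlam⟩ ↦ mem_KSet_iff.2 ?_⟩
  · have hge := hχ _ (.gen (sub_algebraMap_mem_fibreGens j))
    have hle := hχ _ (.gen (algebraMap_sub_mem_fibreGens j))
    rw [← neg_sub, map_neg, neg_nonneg] at hle
    rw [apply_sub_algebraMap] at hge hle
    exact sub_eq_zero.1 (hle.antisymm hge)
  · rintro s (hs | hs)
    · exact hχ s (.gen hs)
    · obtain ⟨j, rfl | rfl⟩ := mem_iUnion.1 hs
      · rw [apply_sub_algebraMap, hlam, sub_self]
      · rw [← neg_sub, map_neg, apply_sub_algebraMap, hlam, sub_self, neg_zero]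

theorem ae_apply_eq_zero_of_integral_sq_nonpos {μ : Measure (A →ₐ[ℝ] ℝ)} {g : A}
    (hint : Integrable (fun χ : A →ₐ[ℝ] ℝ ↦ χ (g ^ 2)) μ)
    (hg : ∫ χ : A →ₐ[ℝ] ℝ, χ (g ^ 2) ∂μ ≤ 0) : ∀ᵐ χ : A →ₐ[ℝ] ℝ ∂μ, χ g = 0 := by
  have hsq : 0 ≤ fun χ : A →ₐ[ℝ] ℝ ↦ χ (g ^ 2) := fun χ ↦
    (sq_nonneg (χ g)).trans_eq (map_pow χ g 2).symm
  have hzero := (integral_eq_zero_iff_of_nonneg hsq hint).1 (hg.antisymm (integral_nonneg hsq))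
  filter_upwards [hzero] with χ hχ
  rwa [map_pow, Pi.zero_apply, pow_eq_zero_iff two_ne_zero] at hχ

theorem hasSMP_fibreGens (hS : HasSMP (range f)) : HasSMP (fibreGens f h lam) := by
  intro L hL
  obtain ⟨μ, hμ, hint⟩ := hS L fun a ha ↦ hL a (preordering_mono range_subset_fibreGens ha)
  refine ⟨μ, ?_, hint⟩
  have hfibre (j : Fin m) : ∀ᵐ χ : A →ₐ[ℝ] ℝ ∂μ, χ (h j) = lam j := by
    have hsq := hL _ (.mul (.gen (sub_algebraMap_mem_fibreGens j))
      (.gen (algebraMap_sub_mem_fibreGens j)))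
    rw [← neg_sub (h j), mul_neg, ← sq, map_neg, neg_nonneg, (hint _).2] at hsq
    filter_upwards [ae_apply_eq_zero_of_integral_sq_nonpos (hint _).1 hsq] with χ hχ
    rwa [apply_sub_algebraMap, sub_eq_zero] at hχ
  refine mem_ae_iff.1 ?_
  filter_upwards [mem_ae_iff.2 hμ, ae_all_iff.2 hfibre] with χ hχ hχh
  exact mem_KSet_fibreGens_iff.2 ⟨hχ, hχh⟩

theorem exists_mem_preordering_forall_apply_mul_eq {M : A →ₗ[ℝ] ℝ}
    (hM : ∀ j x, M (h j * x) = lam j * M x) {x : A} (hx : x ∈ preordering (fibreGens f h lam)) :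
    ∃ t ∈ preordering (range f), ∀ z, M (z * x) = M (z * t) := by
  have hzero (j : Fin m) (z : A) : M (z * (h j - algebraMap ℝ A (lam j))) = 0 := by
    rw [mul_sub, map_sub, mul_comm z, hM, mul_comm z, ← Algebra.smul_def, map_smul, smul_eq_mul,
      sub_self]
  induction hx with
  | sq a => exact ⟨a ^ 2, .sq a, fun _ ↦ rfl⟩
  | gen ha =>
    rcases ha with ha | ha
    · exact ⟨_, .gen ha, fun _ ↦ rfl⟩
    · refine ⟨0, isInPreordering_zero, fun z ↦ ?_⟩
      rw [mul_zero, map_zero]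
      obtain ⟨j, rfl | rfl⟩ := mem_iUnion.1 ha
      · exact hzero j z
      · rw [← neg_sub, mul_neg, map_neg, hzero, neg_zero]
  | add _ _ iha ihb =>
    obtain ⟨⟨s, hs, hMs⟩, ⟨t, ht, hMt⟩⟩ := iha, ihb
    exact ⟨s + t, .add hs ht, fun z ↦ by rw [mul_add, mul_add, map_add, map_add, hMs, hMt]⟩
  | mul _ _ iha ihb =>
    obtain ⟨⟨s, hs, hMs⟩, ⟨t, ht, hMt⟩⟩ := iha, ihb
    refine ⟨s * t, .mul hs ht, fun z ↦ ?_⟩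
    rw [← mul_assoc, hMt, mul_right_comm, hMs, mul_right_comm, mul_assoc]

theorem mem_positiveFunctionals_preordering_fibreGens {M : A →ₗ[ℝ] ℝ}
    (hM : M ∈ positiveFunctionals (preordering (range f)))
    (hlam : ∀ j x, M (h j * x) = lam j * M x) :
    M ∈ positiveFunctionals (preordering (fibreGens f h lam)) := fun x hx ↦ by
  obtain ⟨t, ht, hMt⟩ := exists_mem_preordering_forall_apply_mul_eq hlam hx
  have hMx : M x = M t := by simpa only [one_mul] using hMt 1
  exact (hM ht).trans_eq hMx.symm

end Fibres

end FibreTheorem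

/-- **Fibre theorem, (SMP) version.** Let `A` be a finitely generated commutative
real unital algebra, `T` the preordering generated by `f₁, …, f_k`, and let
`h₁, …, h_m ∈ A` be bounded on `K(T)`. Then `T` has (SMP) iff every fibre
preordering `T_λ`, `λ ∈ h(K(T))`, has (SMP). -/
theorem fibre_theorem_SMP {A : Type*} [CommRing A] [Algebra ℝ A]
    (hfg : Algebra.FiniteType ℝ A) {k m : ℕ} (f : Fin k → A) (h : Fin m → A)
    (hbd : ∃ C : ℝ, ∀ χ ∈ KSet (Set.range f), ∀ j : Fin m, |χ (h j)| ≤ C) :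
    HasSMP (Set.range f) ↔
      ∀ lam : Fin m → ℝ,
        (∃ χ ∈ KSet (Set.range f), ∀ j : Fin m, χ (h j) = lam j) →
        HasSMP (fibreGens f h lam) := by
  refine ⟨fun hS _ _ ↦ FibreTheorem.hasSMP_fibreGens hS, fun hfib L hL ↦
    FibreTheorem.isKMomentFunctional_of_forall_nonneg fun a ha ↦ ?_⟩
  by_contra! hLa
  obtain ⟨ι, _, e, heD, he⟩ :=
    FibreTheorem.exists_countable_family_isInPreordering_span_eq_top (Set.range f)
  obtain ⟨M, hM, hMa⟩ := FibreTheorem.exists_isExtremal_apply_neg heD he hL hLa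
  obtain ⟨C, hC⟩ := hbd
  choose lam hlam using fun j ↦
    hM.exists_forall_apply_mul_eq (Set.finite_range f) fun χ hχ ↦ hC χ hχ j
  have hMfib := FibreTheorem.mem_positiveFunctionals_preordering_fibreGens hM.1 hlam
  rcases (KSet (fibreGens f h lam)).eq_empty_or_nonempty with hempty | ⟨χ, hχ⟩
  · have hM0 := FibreTheorem.eq_zero_of_KSet_eq_empty FibreTheorem.finite_fibreGens hempty hMfib
    exact hMa.ne (LinearMap.congr_fun hM0 a)
  · have hSMP := hfib lam ⟨χ, FibreTheorem.mem_KSet_fibreGens_iff.1 hχ⟩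
    refine hMa.not_ge (FibreTheorem.apply_nonneg_of_isKMomentFunctional
      (hSMP M fun _ hx ↦ hMfib hx) fun ψ hψ ↦ ?_)
    exact ha ψ (FibreTheorem.mem_KSet_fibreGens_iff.1 hψ).1
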